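/- arXiv:alg-geom/9506002 — 3 statements merged into one kernel-verified Lean document; each statement's English description precedes it below -/
import Mathlib

section
/- Let f : ℝ² → ℝ be a nonconstant real polynomial function of degree d ≥ 1 in two variables with only finitely many critical points. Then for every admissible radius R, the index i of grad f around the circle of radius R satisfies i ≤ max{1, d − 3}. -/
open MvPolynomial Filter

/-- Evaluation of a polynomial in two variables at the point `(x, y)`. -/
noncomputable def evalP (f : MvPolynomial (Fin 2) ℝ) (x y : ℝ) : ℝ :=
  MvPolynomial.eval ![x, y] f

/-- `p` is a critical point of `f`: both partial derivatives vanish at `p`. -/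
def IsCriticalPt (f : MvPolynomial (Fin 2) ℝ) (p : ℝ × ℝ) : Prop :=
  evalP (pderiv 0 f) p.1 p.2 = 0 ∧ evalP (pderiv 1 f) p.1 p.2 = 0

/-- `u(t) = f_x(R cos t, R sin t)`. -/
noncomputable def uFun (f : MvPolynomial (Fin 2) ℝ) (R t : ℝ) : ℝ :=
  evalP (pderiv 0 f) (R * Real.cos t) (R * Real.sin t)

/-- `v(t) = f_y(R cos t, R sin t)`. -/
noncomputable def vFun (f : MvPolynomial (Fin 2) ℝ) (R t : ℝ) : ℝ :=
  evalP (pderiv 1 f) (R * Real.cos t) (R * Real.sin t)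

/-- The index of `grad f` around the circle of radius `R`, as the winding-number
integral `(1/(2π)) ∫₀^{2π} (u v' - v u')/(u² + v²) dt`. -/
noncomputable def gradIndex (f : MvPolynomial (Fin 2) ℝ) (R : ℝ) : ℝ :=
  (1 / (2 * Real.pi)) *
    ∫ t in (0:ℝ)..(2 * Real.pi),
      (uFun f R t * deriv (vFun f R) t - vFun f R t * deriv (uFun f R) t) /
        ((uFun f R t) ^ 2 + (vFun f R t) ^ 2)

namespace Polynomial.GradIdx

lemma sign_prod_aux (m j : ℕ) (hj : j < m) (z : ℕ → ℝ)
    (hz : ∀ a b, a < b → b < m → z a < z b) :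
    0 < (-1 : ℝ) ^ (m - 1 - j) * ∏ k ∈ (Finset.range m).erase j, (z j - z k) := by
  have h1 : (-1 : ℝ) ^ (m - 1 - j) =
      ∏ k ∈ (Finset.range m).erase j, (if j < k then (-1 : ℝ) else 1) := by
    rw [Finset.prod_ite]
    simp only [Finset.prod_const, one_pow, mul_one]
    congr 1
    have : ((Finset.range m).erase j).filter (fun k => j < k) = Finset.Ioo j m := by
      ext k
      simp only [Finset.mem_filter, Finset.mem_erase, Finset.mem_range, Finset.mem_Ioo]
      omega
    rw [this, Nat.card_Ioo]
    omega
  rw [h1, ← Finset.prod_mul_distrib]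
  apply Finset.prod_pos
  intro k hk
  simp only [Finset.mem_erase, Finset.mem_range] at hk
  split_ifs with h
  · have := hz j k h hk.2
    linarith
  · have := hz k j (by omega) hj
    linarith

lemma alt_coeff_pos (m : ℕ) (hm : 1 ≤ m) (z : ℕ → ℝ)
    (hz : ∀ a b, a < b → b < m → z a < z b) (Q : ℝ[X]) (hQ : Q.degree < m) (e : ℝ)
    (hs : ∀ j < m, 0 < e * (-1 : ℝ) ^ (m - 1 - j) * Q.eval (z j)) :
    0 < e * Q.coeff (m - 1) := by
  have hinj : Set.InjOn z (Finset.range m) := by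
    intro a ha b hb hab
    simp only [Finset.coe_range, Set.mem_Iio] at ha hb
    rcases lt_trichotomy a b with h | h | h
    · exact absurd hab (hz a b h hb).ne
    · exact h
    · exact absurd hab (hz b a h ha).ne'
  have key := Lagrange.coeff_eq_sum (s := Finset.range m) (v := z) hinj (P := Q) (by simpa using hQ)
  rw [Finset.card_range] at key
  rw [key, Finset.mul_sum]
  apply Finset.sum_pos
  · intro j hj
    simp only [Finset.mem_range] at hj
    have h1 := sign_prod_aux m j hj z hz
    have h2 := hs j hj
    set p := ∏ k ∈ (Finset.range m).erase j, (z j - z k)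
    set s := (-1 : ℝ) ^ (m - 1 - j)
    have hs2 : s * s = 1 := by
      rw [← mul_pow]; norm_num
    have hp : p ≠ 0 := by
      rintro h; rw [h] at h1; simp at h1
    have : e * (Q.eval (z j) / p) = (e * s * Q.eval (z j)) / (s * p) := by
      have hs0 : s ≠ 0 := by rintro h; rw [h] at hs2; simp at hs2
      field_simp
    rw [this]
    positivity
  · exact ⟨0, by simp; omega⟩

lemma card_roots_iter (p : ℝ[X]) (k : ℕ) :
    p.roots.card ≤ (derivative^[k] p).roots.card + k := by
  induction k with
  | zero => simp
  | succ k ih =>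
    rw [Function.iterate_succ_apply']
    have := card_roots_le_derivative (derivative^[k] p)
    omega

lemma roots_card_ge (m : ℕ) (z : ℕ → ℝ) (hz : ∀ a b, a < b → b < m → z a < z b)
    (p : ℝ[X]) (hp : p ≠ 0) (hr : ∀ j < m, p.eval (z j) = 0) : m ≤ p.roots.card := by
  have h1 : (Finset.range m).image z ⊆ p.roots.toFinset := by
    intro y hy
    simp only [Finset.mem_image, Finset.mem_range] at hy
    obtain ⟨j, hj, rfl⟩ := hy
    simp [hp, hr j hj]
  have h2 : ((Finset.range m).image z).card = m := by
    rw [Finset.card_image_of_injOn, Finset.card_range]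
    intro a ha b hb hab
    simp only [Finset.coe_range, Set.mem_Iio] at ha hb
    rcases lt_trichotomy a b with h | h | h
    · exact absurd hab (hz a b h hb).ne
    · exact h
    · exact absurd hab (hz b a h ha).ne'
  calc m = _ := h2.symm
    _ ≤ _ := Finset.card_le_card h1
    _ ≤ _ := Multiset.toFinset_card_le _

lemma full_disc (n : ℕ) (c : ℝ) (hc : c ≠ 0) (g : ℝ[X]) (hg : g.natDegree ≤ n + 3)
    (hgc : g.coeff (n + 3) = c) (z : ℕ → ℝ) (hz : ∀ a b, a < b → b < n + 2 → z a < z b)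
    (hr : ∀ j < n + 2, g.derivative.eval (z j) = 0) :
    2 * c * (n + 3) * g.coeff (n + 1) ≤ (n + 2) * g.coeff (n + 2) ^ 2 := by
  have hd0 : g.derivative ≠ 0 := by
    intro h
    have := congrArg (fun p => coeff p (n + 2)) h
    simp only [coeff_derivative, coeff_zero, hgc] at this
    have h3 : ((n + 2 : ℕ) : ℝ) + 1 ≠ 0 := by positivity
    exact (mul_ne_zero hc h3) this
  have h1 := roots_card_ge (n + 2) z hz _ hd0 hr
  have h2 := card_roots_iter g.derivative n
  rw [← Function.iterate_succ_apply] at h2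
  set q := derivative^[n + 1] g with hq
  have hqd : q.natDegree ≤ 2 := by
    have := natDegree_iterate_derivative g (n + 1)
    rw [← hq] at this
    omega
  have hq2 : q.coeff 2 = ((n + 1 + 2).descFactorial (n + 1) : ℕ) * c := by
    rw [hq, coeff_iterate_derivative, nsmul_eq_mul, ← hgc,
      show 2 + (n + 1) = n + 1 + 2 by omega]
  have hq1 : q.coeff 1 = ((n + 1 + 1).descFactorial (n + 1) : ℕ) * g.coeff (n + 2) := by
    rw [hq, coeff_iterate_derivative, nsmul_eq_mul,
      show 1 + (n + 1) = n + 1 + 1 by omega]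
  have hq0 : q.coeff 0 = ((n + 1).descFactorial (n + 1) : ℕ) * g.coeff (n + 1) := by
    rw [hq, coeff_iterate_derivative, nsmul_eq_mul, zero_add]
  have e0 : (n + 1).descFactorial (n + 1) = (n + 1).factorial := Nat.descFactorial_self _
  have e1 : (n + 1 + 1).descFactorial (n + 1) = (n + 2) * (n + 1).factorial := by
    have := Nat.factorial_mul_descFactorial (n := n + 1 + 1) (k := n + 1) (by omega)
    rw [Nat.factorial_succ (n + 1)] at this
    simpa using this
  have e2 : 2 * (n + 1 + 2).descFactorial (n + 1) = (n + 3) * (n + 2) * (n + 1).factorial := by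
    have := Nat.factorial_mul_descFactorial (n := n + 1 + 2) (k := n + 1) (by omega)
    rw [Nat.factorial_succ (n + 2), Nat.factorial_succ (n + 1)] at this
    have e : n + 1 + 2 - (n + 1) = 2 := by omega
    rw [e] at this
    simp only [Nat.factorial_two] at this
    rw [this]; ring
  have hroots : q.roots ≠ 0 := by
    intro h
    rw [h] at h2
    simp at h2
    omega
  obtain ⟨y, hy⟩ := Multiset.exists_mem_of_ne_zero hroots
  have hy' : q.eval y = 0 := by
    have := (mem_roots'.1 hy).2
    exact this
  rw [eval_eq_sum_range' (n := 3) (by omega)] at hy'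
  simp only [Finset.sum_range_succ, Finset.sum_range_zero] at hy'
  have hdisc : 4 * q.coeff 2 * q.coeff 0 ≤ q.coeff 1 ^ 2 := by
    have e : q.coeff 1 ^ 2 - 4 * q.coeff 2 * q.coeff 0 = (2 * q.coeff 2 * y + q.coeff 1) ^ 2
        - 4 * q.coeff 2 * (0 + q.coeff 0 * y ^ 0 + q.coeff 1 * y ^ 1 + q.coeff 2 * y ^ 2) := by
      ring
    rw [hy'] at e
    nlinarith [sq_nonneg (2 * q.coeff 2 * y + q.coeff 1)]
  rw [hq0, hq1, hq2, e0, e1] at hdisc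
  have e2' : (2 : ℝ) * ((n + 1 + 2).descFactorial (n + 1) : ℕ) =
      (n + 3) * (n + 2) * ((n + 1).factorial : ℕ) := by exact_mod_cast e2
  have hF : (0 : ℝ) < ((n + 1).factorial : ℕ) := by exact_mod_cast Nat.factorial_pos _
  push_cast at hdisc e2'
  set F : ℝ := (((n + 1).factorial : ℕ) : ℝ)
  have : (2 * c * (n + 3) * g.coeff (n + 1)) * ((n + 2) * F ^ 2) ≤
      ((n + 2) * g.coeff (n + 2) ^ 2) * ((n + 2) * F ^ 2) := by
    calc (2 * c * (n + 3) * g.coeff (n + 1)) * ((n + 2) * F ^ 2)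
        = 2 * ((n + 3) * (n + 2) * F) * c * (F * g.coeff (n + 1)) := by ring
      _ = 2 * (2 * ((n + 1 + 2).descFactorial (n + 1) : ℕ)) * c * (F * g.coeff (n + 1)) := by
          rw [e2']
      _ ≤ _ := by
          refine le_trans (le_of_eq ?_) (hdisc.trans (le_of_eq ?_)) <;> ring
  exact le_of_mul_le_mul_right this (by positivity)

lemma full_deriv (n : ℕ) (c : ℝ) (hc : c ≠ 0) (g h : ℝ[X]) (hg : g.natDegree ≤ n + 3)
    (hh : h.natDegree ≤ n + 2)
    (hgc : g.coeff (n + 3) = c) (z : ℕ → ℝ) (hz : ∀ a b, a < b → b < n + 2 → z a < z b)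
    (hr : ∀ j < n + 2, g.derivative.eval (z j) = 0)
    (hs : ∀ j < n + 2, 0 < c * (-1 : ℝ) ^ (n + 1 - j) * h.eval (z j)) :
    0 < (n + 3) * c * h.coeff (n + 1) - (n + 2) * h.coeff (n + 2) * g.coeff (n + 2) := by
  set al : ℝ := h.coeff (n + 2) / ((n + 3) * c) with hal
  have hn3 : (n + 3 : ℝ) ≠ 0 := by positivity
  set Q : ℝ[X] := h - C al * g.derivative with hQ
  have hgd : g.derivative.natDegree ≤ n + 2 := by
    have := natDegree_derivative_le g
    omega
  have hQd : Q.natDegree ≤ n + 2 := by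
    refine (natDegree_sub_le _ _).trans (max_le hh ?_)
    exact (natDegree_C_mul_le _ _).trans hgd
  have hQ2 : Q.coeff (n + 2) = 0 := by
    rw [hQ, coeff_sub, coeff_C_mul, coeff_derivative, hgc, hal]
    push_cast
    field_simp
    ring
  have hdeg : Q.degree < ((n + 2 : ℕ) : WithBot ℕ) := by
    rw [degree_lt_iff_coeff_zero]
    intro k hk
    rcases Nat.eq_or_lt_of_le hk with h | h
    · rw [← h]; exact hQ2
    · exact coeff_eq_zero_of_natDegree_lt (by omega)
  have := alt_coeff_pos (n + 2) (by omega) z hz Q hdeg c (by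
    intro j hj
    have e : Q.eval (z j) = h.eval (z j) := by
      rw [hQ, eval_sub, eval_mul, hr j hj]; simp
    rw [e]
    have := hs j hj
    simpa using this)
  have e : n + 2 - 1 = n + 1 := by omega
  rw [e, hQ, coeff_sub, coeff_C_mul, coeff_derivative, hal] at this
  have h4 : (n + 3) * c * h.coeff (n + 1) - (n + 2) * h.coeff (n + 2) * g.coeff (n + 2) =
    (n + 3) * (c * (h.coeff (n + 1) - h.coeff (n + 2) / ((n + 3) * c) *
      (g.coeff (n + 1 + 1) * (((n + 1 : ℕ) : ℝ) + 1)))) := by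
    push_cast
    field_simp
    ring
  rw [h4]
  positivity

lemma no_poly (q : ℝ[X]) (R : ℝ) (h1 : ∀ x ≥ R, q.eval x ≤ 0)
    (h2 : ∀ x ≥ R, 0 < q.derivative.eval x) : False := by
  have hmono : StrictMonoOn (fun x => q.eval x) (Set.Ici R) := by
    apply strictMonoOn_of_deriv_pos (convex_Ici R) q.continuous.continuousOn
    intro x hx
    rw [interior_Ici] at hx
    rw [Polynomial.deriv]
    exact h2 x hx.le
  have hdeg : 0 < q.degree := by
    by_contra hcon
    have := eq_C_of_degree_le_zero (not_lt.1 hcon)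
    have h3 := h2 R le_rfl
    rw [this] at h3
    simp at h3
  have habs := q.abs_tendsto_atTop hdeg
  have hev := (habs.eventually_gt_atTop |q.eval R|).and (Filter.eventually_gt_atTop R)
  obtain ⟨x, hx1, hx2⟩ := hev.exists
  have a := h1 x hx2.le
  have b := h1 R le_rfl
  have c' := hmono (Set.mem_Ici.2 le_rfl) (Set.mem_Ici.2 hx2.le) hx2
  rw [abs_of_nonpos a, abs_of_nonpos b] at hx1
  simp only at c'
  linarith

lemma floor_const {α : Type*} [TopologicalSpace α] (S : Set α) (hS : IsPreconnected S) (g : α → ℝ)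
    (hg : ContinuousOn g S) (hsin : ∀ a ∈ S, Real.sin (g a) ≠ 0) (a b : α) (ha : a ∈ S)
    (hb : b ∈ S) : ⌊g a / Real.pi⌋ = ⌊g b / Real.pi⌋ := by
  have key : ∀ a b : α, a ∈ S → b ∈ S → ⌊g b / Real.pi⌋ ≤ ⌊g a / Real.pi⌋ := by
    intro a b ha hb
    by_contra hcon
    push Not at hcon
    have h1 : g a ≤ (⌊g b / Real.pi⌋ : ℝ) * Real.pi := by
      have := Int.floor_lt.1 hcon
      rw [div_lt_iff₀ Real.pi_pos] at this
      exact this.le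
    have h2 : (⌊g b / Real.pi⌋ : ℝ) * Real.pi ≤ g b := by
      have := Int.floor_le (g b / Real.pi)
      rwa [le_div_iff₀ Real.pi_pos] at this
    obtain ⟨y, hy, hy2⟩ := hS.intermediate_value ha hb hg ⟨h1, h2⟩
    apply hsin y hy
    rw [hy2, Real.sin_int_mul_pi]
  exact le_antisymm (key b a hb ha) (key a b ha hb)

lemma floor_sign (t : ℝ) (ht : Real.sin t ≠ 0) :
    0 < (-1 : ℝ) ^ ⌊t / Real.pi⌋ * Real.sin t := by
  set n := ⌊t / Real.pi⌋ with hn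
  have h1 : (n : ℝ) * Real.pi ≤ t := by
    have := Int.floor_le (t / Real.pi)
    rwa [le_div_iff₀ Real.pi_pos] at this
  have h2 : t < (n + 1 : ℝ) * Real.pi := by
    have := Int.lt_floor_add_one (t / Real.pi)
    rwa [div_lt_iff₀ Real.pi_pos] at this
  have h3 : t = (t - n * Real.pi) + n * Real.pi := by ring
  have h4 : Real.sin t = (-1) ^ n * Real.sin (t - n * Real.pi) := by
    conv_lhs => rw [h3]
    rw [Real.sin_add_int_mul_pi]
  have h5 : 0 ≤ Real.sin (t - n * Real.pi) :=
    Real.sin_nonneg_of_nonneg_of_le_pi (by linarith) (by linarith)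
  have h6 : (-1 : ℝ) ^ n * Real.sin t = Real.sin (t - n * Real.pi) := by
    rw [h4, ← mul_assoc, ← mul_zpow]; simp
  rw [h6]
  refine lt_of_le_of_ne h5 ?_
  intro h
  rw [h4, ← h] at ht
  simp at ht

lemma crossing (g : ℝ → ℝ) (hg : Continuous g) (a b : ℝ) (hab : a ≤ b) (k : ℕ)
    (hk : (k : ℤ) ≤ ⌊g b / Real.pi⌋ - ⌊g a / Real.pi⌋) :
    ∃ z : ℕ → ℝ, (∀ i j, i < j → j < k → z i < z j) ∧
      ∀ j < k, z j ∈ Set.Icc a b ∧ g (z j) = ((⌊g a / Real.pi⌋ + 1 + j : ℤ) : ℝ) * Real.pi := by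
  induction k with
  | zero => exact ⟨fun _ => 0, by simp, by simp⟩
  | succ k ih =>
    obtain ⟨z, hz1, hz2⟩ := ih (by push_cast at hk; omega)
    set n0 := ⌊g a / Real.pi⌋ with hn0
    have hw : ∃ w ∈ Set.Icc a b, g w < ((n0 + 1 + k : ℤ) : ℝ) * Real.pi ∧ ∀ j < k, z j ≤ w := by
      rcases Nat.eq_zero_or_pos k with h0 | h0
      · refine ⟨a, ⟨le_rfl, hab⟩, ?_, by intro j hj; omega⟩
        have := Int.lt_floor_add_one (g a / Real.pi)
        rw [div_lt_iff₀ Real.pi_pos] at this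
        rw [h0]; push_cast; simpa using this
      · refine ⟨z (k - 1), (hz2 (k - 1) (by omega)).1, ?_, ?_⟩
        · rw [(hz2 (k - 1) (by omega)).2]
          apply mul_lt_mul_of_pos_right _ Real.pi_pos
          apply Int.cast_lt.2
          omega
        · intro j hj
          rcases Nat.lt_or_ge j (k - 1) with h | h
          · exact (hz1 j (k - 1) h (by omega)).le
          · rw [show j = k - 1 by omega]
    obtain ⟨w, hwI, hwlt, hwz⟩ := hw
    have hb : ((n0 + 1 + k : ℤ) : ℝ) * Real.pi ≤ g b := by
      have h1 := Int.floor_le (g b / Real.pi)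
      rw [le_div_iff₀ Real.pi_pos] at h1
      refine le_trans ?_ h1
      apply mul_le_mul_of_nonneg_right _ Real.pi_pos.le
      apply Int.cast_le.2
      push_cast at hk
      omega
    obtain ⟨v, hv, hv2⟩ := intermediate_value_Icc hwI.2 hg.continuousOn ⟨hwlt.le, hb⟩
    have hwv : w < v := by
      refine lt_of_le_of_ne hv.1 ?_
      rintro rfl
      rw [hv2] at hwlt
      exact lt_irrefl _ hwlt
    refine ⟨fun j => if j < k then z j else v, ?_, ?_⟩
    · intro i j hij hj
      have hik : i < k := by omega
      simp only [hik, if_true]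
      split_ifs with h
      · exact hz1 i j hij h
      · exact (hwz i hik).trans_lt hwv
    · intro j hj
      simp only
      split_ifs with h
      · exact hz2 j h
      · have : j = k := by omega
        subst this
        exact ⟨⟨hwI.1.trans hv.1, hv.2⟩, hv2⟩

lemma far_sign (H : ℝ[X][X]) (m : ℕ) (hH : H.natDegree ≤ m) (b : ℝ) (hb : b ≠ 0)
    (hc : H.coeff m = C b) (K : ℝ) :
    ∃ Y0 : ℝ, 0 < Y0 ∧ ∀ x : ℝ, |x| ≤ K → ∀ y : ℝ, Y0 ≤ |y| →
      0 < H.evalEval x y * (b * y ^ m) := by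
  have hbd : ∃ B : ℝ, ∀ x ∈ Set.Icc (-K) K, ‖∑ k ∈ Finset.range m, |(H.coeff k).eval x|‖ ≤ B := by
    apply isCompact_Icc.exists_bound_of_continuousOn
    apply Continuous.continuousOn
    apply continuous_finsetSum
    intro k _
    exact (H.coeff k).continuous.abs
  obtain ⟨B, hB⟩ := hbd
  have hbp : 0 < |b| := abs_pos.2 hb
  refine ⟨max 1 (|B| / |b| + 1), by positivity, ?_⟩
  intro x hx y hy
  have hy1 : 1 ≤ |y| := (le_max_left _ _).trans hy
  have hy2 : |B| / |b| + 1 ≤ |y| := (le_max_right _ _).trans hy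
  have hBy : |B| < |b| * |y| := by
    have : |B| / |b| < |y| := by linarith
    rw [div_lt_iff₀ hbp] at this
    linarith
  have hev : H.evalEval x y = ∑ k ∈ Finset.range m, (H.coeff k).eval x * y ^ k + b * y ^ m := by
    rw [← map_evalRingHom_eval, eval_eq_sum_range' (n := m + 1)
      (lt_of_le_of_lt natDegree_map_le (by omega)), Finset.sum_range_succ]
    simp [hc]
  set L := ∑ k ∈ Finset.range m, (H.coeff k).eval x * y ^ k with hL
  have hy0 : 0 < |y| := by linarith
  have hLb : |L| * |y| ≤ |B| * |y| ^ m := by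
    have h1 : |L| * |y| ≤ ∑ k ∈ Finset.range m, |(H.coeff k).eval x| * |y| ^ m := by
      calc |L| * |y| ≤ (∑ k ∈ Finset.range m, |(H.coeff k).eval x * y ^ k|) * |y| :=
            mul_le_mul_of_nonneg_right (Finset.abs_sum_le_sum_abs _ _) hy0.le
        _ = ∑ k ∈ Finset.range m, |(H.coeff k).eval x| * |y| ^ (k + 1) := by
            rw [Finset.sum_mul]
            apply Finset.sum_congr rfl
            intro k _
            rw [abs_mul, abs_pow]; ring
        _ ≤ _ := by
            apply Finset.sum_le_sum
            intro k hk
            apply mul_le_mul_of_nonneg_left _ (abs_nonneg _)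
            apply pow_le_pow_right₀ hy1
            simpa using hk
    rw [← Finset.sum_mul] at h1
    refine h1.trans (mul_le_mul_of_nonneg_right ?_ (by positivity))
    have h2 := hB x (abs_le.1 hx)
    exact (le_abs_self _).trans (h2.trans (le_abs_self _))
  have hlt : |L| < |b * y ^ m| := by
    rw [abs_mul, abs_pow]
    have : |L| * |y| < (|b| * |y| ^ m) * |y| := by
      have : |B| * |y| ^ m < (|b| * |y|) * |y| ^ m :=
        mul_lt_mul_of_pos_right hBy (by positivity)
      linarith
    exact lt_of_mul_lt_mul_right this hy0.le
  rw [hev]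
  set M := b * y ^ m
  have h3 : -(|L| * |M|) ≤ L * M := by rw [← abs_mul]; exact neg_abs_le _
  have h4 : |L| * |M| < |M| * |M| := mul_lt_mul_of_pos_right hlt (lt_of_le_of_lt (abs_nonneg _) hlt)
  have h5 : |M| * |M| = M * M := abs_mul_abs_self M
  nlinarith

lemma right_bound_one (d : ℕ) (hd : 1 ≤ d) (c : ℝ) (hc : c ≠ 0) (F : ℝ[X][X])
    (hF : F.natDegree ≤ d) (hFc : F.coeff d = C c) (x : ℝ) (T : ℝ → ℝ) (hT : Continuous T)
    (hs : ∀ y, ∃ r > 0, F.derivative.evalEval x y = r * Real.sin (T y)) (Y : ℝ) (hY : 0 ≤ Y) :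
    ⌊T Y / Real.pi⌋ - ⌊T (-Y) / Real.pi⌋ ≤ (d : ℤ) - 1 := by
  by_contra hcon
  push Not at hcon
  obtain ⟨z, hz1, hz2⟩ := crossing T hT (-Y) Y (by linarith) d (by omega)
  set p := (F.map (evalRingHom x)).derivative with hp
  have hcoef : p.coeff (d - 1) ≠ 0 := by
    rw [hp, coeff_derivative, coeff_map, Nat.sub_add_cancel hd, hFc]
    simp only [coe_evalRingHom, eval_C]
    have : ((d - 1 : ℕ) : ℝ) + 1 ≠ 0 := by positivity
    exact mul_ne_zero hc this
  have hp0 : p ≠ 0 := by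
    intro h; rw [h] at hcoef; simp at hcoef
  have h1 := roots_card_ge d z hz1 p hp0 (by
    intro j hj
    obtain ⟨r, -, hr⟩ := hs (z j)
    rw [hp, derivative_map, map_evalRingHom_eval, hr, (hz2 j hj).2, Real.sin_int_mul_pi, mul_zero])
  have h2 := p.card_roots'
  have h3 : p.natDegree ≤ d - 1 := by
    have a := natDegree_derivative_le (F.map (evalRingHom x))
    have b := natDegree_map_le (f := evalRingHom x) (p := F)
    rw [← hp] at a
    omega
  omega

lemma neg_one_zpow_parity {a b : ℤ} {n : ℕ} (h : 0 < (-1 : ℝ) ^ a * (-1 : ℝ) ^ b * (-1 : ℝ) ^ n) :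
    Even (a - b - n) := by
  by_contra hcon
  rw [Int.not_even_iff_odd] at hcon
  have e : (-1 : ℝ) ^ a * (-1 : ℝ) ^ b * (-1 : ℝ) ^ n = (-1 : ℝ) ^ (a + b + n) := by
    rw [zpow_add₀ (by norm_num), zpow_add₀ (by norm_num), zpow_natCast]
  have h2 : Odd (a + b + n) := by
    obtain ⟨k, hk⟩ := hcon
    exact ⟨k + b + n, by omega⟩
  rw [e, h2.neg_one_zpow] at h
  norm_num at h

lemma right_bound_three (n : ℕ) (c : ℝ) (hc : c ≠ 0) (F G : ℝ[X][X])
    (hF : F.natDegree ≤ n + 3) (hFc : F.coeff (n + 3) = C c)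
    (hG : ∀ k, G.coeff k = derivative (F.coeff k)) (R : ℝ) (hR : 0 < R) (T : ℝ → ℝ → ℝ)
    (hT : ContinuousOn (fun p : ℝ × ℝ => T p.1 p.2) {p | R ≤ p.1})
    (hs : ∀ x y, R ≤ x → ∃ r > 0, G.evalEval x y = r * Real.cos (T x y) ∧
      F.derivative.evalEval x y = r * Real.sin (T x y)) :
    ∃ Y0 : ℝ, ∀ Y ≥ Y0, ⌊T R Y / Real.pi⌋ - ⌊T R (-Y) / Real.pi⌋ ≤ (n : ℤ) := by
  have hFd : F.derivative.natDegree ≤ n + 2 := by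
    have := natDegree_derivative_le F
    omega
  set b : ℝ := (n + 3) * c with hb
  have hn3 : (0 : ℝ) < n + 3 := by positivity
  have hb0 : b ≠ 0 := mul_ne_zero hn3.ne' hc
  have hFdc : F.derivative.coeff (n + 2) = C b := by
    rw [coeff_derivative, hFc, hb, mul_comm, C_mul]
    push_cast
    simp only [map_add, map_natCast, map_ofNat]
    ring
  have far := far_sign F.derivative (n + 2) hFd b hb0 hFdc
  have hcont : ∀ x, R ≤ x → Continuous (T x) := by
    intro x hx
    have : Continuous ((fun p : ℝ × ℝ => T p.1 p.2) ∘ fun y : ℝ => (x, y)) :=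
      hT.comp_continuous (by fun_prop) (fun y => hx)
    exact this
  have sgn : ∀ x y, R ≤ x → 0 < F.derivative.evalEval x y * (b * y ^ (n + 2)) →
      0 < (-1 : ℝ) ^ ⌊T x y / Real.pi⌋ * (c * y ^ (n + 2)) ∧ Real.sin (T x y) ≠ 0 := by
    intro x y hx h
    obtain ⟨r, hr, -, hr2⟩ := hs x y hx
    rw [hr2] at h
    have h1 : Real.sin (T x y) ≠ 0 := by
      intro h0; rw [h0] at h; simp at h
    refine ⟨?_, h1⟩
    have h2 := floor_sign _ h1
    have h3 : 0 < Real.sin (T x y) * (c * y ^ (n + 2)) := by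
      have e : r * Real.sin (T x y) * (b * y ^ (n + 2)) =
        (r * (n + 3)) * (Real.sin (T x y) * (c * y ^ (n + 2))) := by rw [hb]; ring
      rw [e] at h
      exact (pos_iff_pos_of_mul_pos h).1 (by positivity)
    have h4 := mul_pos h2 h3
    have e : (-1 : ℝ) ^ ⌊T x y / Real.pi⌋ * Real.sin (T x y) *
        (Real.sin (T x y) * (c * y ^ (n + 2))) =
        (Real.sin (T x y)) ^ 2 * ((-1 : ℝ) ^ ⌊T x y / Real.pi⌋ * (c * y ^ (n + 2))) := by ring
    rw [e] at h4
    exact (pos_iff_pos_of_mul_pos h4).1 (by positivity)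
  obtain ⟨Y0, hY0, hfar0⟩ := far R
  refine ⟨Y0, ?_⟩
  intro Y hY
  by_contra hcon
  push Not at hcon
  have hYp : 0 < Y := by linarith
  have absR : |R| ≤ R := by rw [abs_of_pos hR]
  have hN : ((n + 2 : ℕ) : ℤ) ≤ ⌊T R Y / Real.pi⌋ - ⌊T R (-Y) / Real.pi⌋ := by
    have s1 := (sgn R Y le_rfl (hfar0 R absR Y (by rwa [abs_of_pos hYp]))).1
    have s2 := (sgn R (-Y) le_rfl (hfar0 R absR (-Y) (by rwa [abs_neg, abs_of_pos hYp]))).1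
    have h4 := mul_pos s1 s2
    have e : (-1 : ℝ) ^ ⌊T R Y / Real.pi⌋ * (c * Y ^ (n + 2)) *
        ((-1 : ℝ) ^ ⌊T R (-Y) / Real.pi⌋ * (c * (-Y) ^ (n + 2))) =
        (c * Y ^ (n + 2)) ^ 2 * ((-1 : ℝ) ^ ⌊T R Y / Real.pi⌋ *
          (-1 : ℝ) ^ ⌊T R (-Y) / Real.pi⌋ * (-1 : ℝ) ^ (n + 2)) := by
      rw [neg_pow Y]; ring
    rw [e] at h4
    have h5 := (pos_iff_pos_of_mul_pos h4).1 (by positivity)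
    obtain ⟨k, hk⟩ := neg_one_zpow_parity h5
    push_cast at hk ⊢
    omega
  have main : ∀ x ≥ R, ∃ Y', 0 < Y' ∧
      ((n + 2 : ℕ) : ℤ) ≤ ⌊T x Y' / Real.pi⌋ - ⌊T x (-Y') / Real.pi⌋ ∧
      0 < (-1 : ℝ) ^ ⌊T x (-Y') / Real.pi⌋ * (c * (-Y') ^ (n + 2)) := by
    intro x hx
    obtain ⟨Y1, hY1, hfar1⟩ := far x
    have hx0 : 0 < x := by linarith
    refine ⟨max Y Y1, lt_max_of_lt_left hYp, ?_, ?_⟩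
    swap
    · refine (sgn x _ hx (hfar1 x ?_ _ ?_)).1
      · rw [abs_of_pos hx0]
      · rw [abs_neg, abs_of_pos (lt_max_of_lt_left hYp)]; exact le_max_right _ _
    set Y' := max Y Y1 with hY'
    have c1 : ∀ s : ℝ, |s| = 1 → ⌊T R (s * Y) / Real.pi⌋ = ⌊T x (s * Y') / Real.pi⌋ := by
      intro s hs1
      have e1 : ⌊T R (s * Y) / Real.pi⌋ = ⌊T R (s * Y') / Real.pi⌋ := by
        refine floor_const (Set.Icc Y Y') isPreconnected_Icc (fun y => T R (s * y)) ?_ ?_ Y Y'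
          ⟨le_rfl, le_max_left _ _⟩ ⟨le_max_left _ _, le_rfl⟩
        · exact ((hcont R le_rfl).comp (by fun_prop)).continuousOn
        · intro y hy
          refine (sgn R (s * y) le_rfl (hfar0 R absR _ ?_)).2
          rw [abs_mul, hs1, one_mul]
          exact hY.trans (hy.1.trans (le_abs_self y))
      have e2 : ⌊T R (s * Y') / Real.pi⌋ = ⌊T x (s * Y') / Real.pi⌋ := by
        refine floor_const (Set.Icc R x) isPreconnected_Icc (fun u => T u (s * Y')) ?_ ?_ R x
          ⟨le_rfl, hx⟩ ⟨hx, le_rfl⟩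
        · refine hT.comp (f := fun u : ℝ => (u, s * Y')) (by fun_prop) ?_
          intro u hu
          exact hu.1
        · intro u hu
          refine (sgn u (s * Y') hu.1 (hfar1 u ?_ _ ?_)).2
          · rw [abs_of_pos (hR.trans_le hu.1)]; exact hu.2
          · rw [abs_mul, hs1, one_mul]
            exact (le_max_right _ _).trans (le_abs_self _)
      rw [e1, e2]
    have p1 := c1 1 (by norm_num)
    have p2 := c1 (-1) (by norm_num)
    rw [one_mul, one_mul] at p1
    rw [neg_one_mul, neg_one_mul] at p2
    rw [← p1, ← p2]
    exact hN
  have roots : ∀ x ≥ R, ∃ z : ℕ → ℝ, (∀ a b, a < b → b < n + 2 → z a < z b) ∧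
      (∀ j < n + 2, (F.map (evalRingHom x)).derivative.eval (z j) = 0) ∧
      (∀ j < n + 2, 0 < c * (-1 : ℝ) ^ (n + 1 - j) * (G.map (evalRingHom x)).eval (z j)) := by
    intro x hx
    obtain ⟨Y', hY'0, hN', hsg⟩ := main x hx
    obtain ⟨z, hz1, hz2⟩ := crossing (T x) (hcont x hx) (-Y') Y' (by linarith) (n + 2) hN'
    refine ⟨z, hz1, ?_, ?_⟩
    · intro j hj
      obtain ⟨r, -, -, hr⟩ := hs x (z j) hx
      rw [derivative_map, map_evalRingHom_eval, hr, (hz2 j hj).2, Real.sin_int_mul_pi, mul_zero]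
    · intro j hj
      obtain ⟨r, hr0, hr, -⟩ := hs x (z j) hx
      rw [map_evalRingHom_eval, hr, (hz2 j hj).2, Real.cos_int_mul_pi]
      set n0 := ⌊T x (-Y') / Real.pi⌋
      have e : (-1 : ℝ) ^ n0 * (c * (-Y') ^ (n + 2)) =
          Y' ^ (n + 2) * (c * ((-1 : ℝ) ^ n0 * (-1 : ℝ) ^ (n + 2))) := by
        rw [neg_pow Y']; ring
      rw [e] at hsg
      have h1 := (pos_iff_pos_of_mul_pos hsg).1 (by positivity)
      have e2 : c * (-1 : ℝ) ^ (n + 1 - j) * (r * (-1 : ℝ) ^ (n0 + 1 + (j : ℤ))) =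
          r * (c * ((-1 : ℝ) ^ n0 * (-1 : ℝ) ^ (n + 2))) := by
        rw [zpow_add₀ (by norm_num), zpow_add₀ (by norm_num), zpow_natCast,
          show n + 2 = (n + 1 - j) + 1 + j by omega, pow_add, pow_add]
        simp
        ring
      rw [e2]
      exact mul_pos hr0 h1
  set p1 := F.coeff (n + 2)
  set p2 := F.coeff (n + 1)
  apply no_poly (C (2 * c * (n + 3)) * p2 - C ((n : ℝ) + 2) * p1 ^ 2) R
  · intro x hx
    obtain ⟨z, hz1, hz2, -⟩ := roots x hx
    have := full_disc n c hc (F.map (evalRingHom x)) (natDegree_map_le.trans hF)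
      (by simp [hFc]) z hz1 hz2
    simp only [coeff_map, coe_evalRingHom] at this
    simp only [eval_sub, eval_mul, eval_C, eval_pow]
    linarith
  · intro x hx
    obtain ⟨z, hz1, hz2, hz3⟩ := roots x hx
    have hGd : G.natDegree ≤ n + 2 := by
      rw [natDegree_le_iff_coeff_eq_zero]
      intro k hk
      rw [hG]
      rcases Nat.lt_or_ge (n + 3) k with h | h
      · rw [coeff_eq_zero_of_natDegree_lt (by omega), derivative_zero]
      · rw [show k = n + 3 by omega, hFc, derivative_C]
    have := full_deriv n c hc (F.map (evalRingHom x)) (G.map (evalRingHom x))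
      (natDegree_map_le.trans hF) (natDegree_map_le.trans hGd)
      (by simp [hFc]) z hz1 hz2 hz3
    simp only [coeff_map, coe_evalRingHom, hG] at this
    simp only [derivative_sub, derivative_mul, derivative_C, eval_sub, eval_mul, eval_C,
      derivative_pow, zero_mul, zero_add]
    simp
    nlinarith

end Polynomial.GradIdx

namespace Polynomial.GradIdx

/-- The linear forms giving a rotation by the angle `a`. -/
noncomputable def rotForm (a : ℝ) : Fin 2 → ℝ[X][X] :=
  ![C (C (Real.cos a) * X) + C (C (-Real.sin a)) * X,
    C (C (Real.sin a) * X) + C (C (Real.cos a)) * X]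

/-- The polynomial `p` in coordinates rotated by the angle `a`. -/
noncomputable def rotPoly (a : ℝ) (p : MvPolynomial (Fin 2) ℝ) : ℝ[X][X] :=
  MvPolynomial.aeval (rotForm a) p

lemma evalEval_rotPoly (a : ℝ) (p : MvPolynomial (Fin 2) ℝ) (x y : ℝ) :
    (rotPoly a p).evalEval x y = evalP p (x * Real.cos a - y * Real.sin a)
      (x * Real.sin a + y * Real.cos a) := by
  unfold rotPoly evalP
  induction p using MvPolynomial.induction_on with
  | C r =>
    rw [MvPolynomial.aeval_C, MvPolynomial.eval_C]
    simp
  | add p q hp hq => rw [map_add, map_add, evalEval_add, hp, hq]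
  | mul_X p i hp =>
    rw [map_mul, map_mul, evalEval_mul, hp, MvPolynomial.aeval_X, MvPolynomial.eval_X]
    congr 1
    fin_cases i <;> simp [rotForm, evalEval_C, -map_mul, -map_neg] <;> ring

lemma derivative_rotPoly (a : ℝ) (p : MvPolynomial (Fin 2) ℝ) :
    (rotPoly a p).derivative = C (C (-Real.sin a)) * rotPoly a (MvPolynomial.pderiv 0 p) +
      C (C (Real.cos a)) * rotPoly a (MvPolynomial.pderiv 1 p) := by
  unfold rotPoly
  induction p using MvPolynomial.induction_on with
  | C r =>
    rw [MvPolynomial.aeval_C]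
    simp
  | add p q hp hq => simp only [map_add, hp, hq]; ring
  | mul_X p i hp =>
    rw [map_mul, derivative_mul, hp, MvPolynomial.aeval_X, Derivation.leibniz, Derivation.leibniz]
    fin_cases i
    · simp [rotForm, MvPolynomial.pderiv_X]
      ring
    · simp [rotForm, MvPolynomial.pderiv_X]
      ring

lemma coeff_rot_step (q : ℝ[X][X]) (u v : ℝ) (k : ℕ) :
    (q * (C (C u * X) + C (C v) * X)).coeff k = q.coeff k * (C u * X) +
      C v * (if k = 0 then 0 else q.coeff (k - 1)) := by
  have e : q * (C (C v) * X) = C (C v) * (q * X) := by ring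
  rw [mul_add, coeff_add, coeff_mul_C, e, coeff_C_mul]
  congr 2
  cases k with
  | zero => simp
  | succ k => simp

set_option maxHeartbeats 1000000 in
lemma coeff_rotPoly_deriv (a : ℝ) (p : MvPolynomial (Fin 2) ℝ) (k : ℕ) :
    (C (C (Real.cos a)) * rotPoly a (MvPolynomial.pderiv 0 p) +
      C (C (Real.sin a)) * rotPoly a (MvPolynomial.pderiv 1 p)).coeff k =
      derivative ((rotPoly a p).coeff k) := by
  unfold rotPoly
  revert k
  induction p using MvPolynomial.induction_on with
  | C r =>
    intro k
    rw [MvPolynomial.aeval_C]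
    cases k <;> simp [coeff_C]
  | add p q hp hq =>
    intro k
    simp only [map_add, coeff_add, coeff_C_mul, ← hp, ← hq]; ring
  | mul_X p i hp =>
    intro k
    have hpk := hp k
    have hpk' := hp (k - 1)
    simp only [coeff_add, coeff_C_mul] at hpk hpk'
    rw [Derivation.leibniz, Derivation.leibniz]
    simp only [smul_eq_mul, map_add, map_mul, MvPolynomial.aeval_X]
    generalize MvPolynomial.aeval (rotForm a) (MvPolynomial.pderiv 0 p) = P0 at *
    generalize MvPolynomial.aeval (rotForm a) (MvPolynomial.pderiv 1 p) = P1 at *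
    generalize MvPolynomial.aeval (rotForm a) p = P at *
    have key : ∀ u v : ℝ, (C (C (Real.cos a)) * ((C (C u * X) + C (C v) * X) * P0) +
        C (C (Real.sin a)) * ((C (C u * X) + C (C v) * X) * P1) + C (C u) * P).coeff k =
        derivative ((P * (C (C u * X) + C (C v) * X)).coeff k) := by
      intro u v
      rw [mul_comm _ P0, mul_comm _ P1]
      simp only [coeff_add, coeff_C_mul, coeff_rot_step]
      simp only [derivative_mul, derivative_add, derivative_C, derivative_X, zero_mul, zero_add,
        mul_one, ← hpk]
      split_ifs with h
      · simp; ring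
      · simp only [← hpk']; ring
    have f0 : rotForm a 0 = C (C (Real.cos a) * X) + C (C (-Real.sin a)) * X := rfl
    have f1 : rotForm a 1 = C (C (Real.sin a) * X) + C (C (Real.cos a)) * X := rfl
    obtain rfl | rfl : i = 0 ∨ i = 1 := by omega
    · have hk := key (Real.cos a) (-Real.sin a)
      rw [← f0] at hk
      rw [← hk, MvPolynomial.pderiv_X_self,
        MvPolynomial.pderiv_X_of_ne (show (0 : Fin 2) ≠ 1 by decide), map_one, map_zero]
      congr 1
      ring
    · have hk := key (Real.sin a) (Real.cos a)
      rw [← f1] at hk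
      rw [← hk, MvPolynomial.pderiv_X_self,
        MvPolynomial.pderiv_X_of_ne (show (1 : Fin 2) ≠ 0 by decide), map_one, map_zero]
      congr 1
      ring

lemma natDegree_linForm (u v : ℝ) : (C (C u * X) + C (C v) * X : ℝ[X][X]).natDegree ≤ 1 := by
  refine (natDegree_add_le _ _).trans (max_le (by rw [natDegree_C]; omega) ?_)
  exact (natDegree_C_mul_le _ _).trans natDegree_X_le

lemma natDegree_rot_mono (a : ℝ) (m n : ℕ) :
    (rotForm a 0 ^ m * rotForm a 1 ^ n).natDegree ≤ m + n ∧
    (rotForm a 0 ^ m * rotForm a 1 ^ n).coeff (m + n) =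
      C ((-Real.sin a) ^ m * Real.cos a ^ n) := by
  have h0 : (rotForm a 0).natDegree ≤ 1 := natDegree_linForm _ _
  have h1 : (rotForm a 1).natDegree ≤ 1 := natDegree_linForm _ _
  have p0 : (rotForm a 0 ^ m).natDegree ≤ m := by
    have := natDegree_pow_le_of_le m h0
    simpa using this
  have p1 : (rotForm a 1 ^ n).natDegree ≤ n := by
    have := natDegree_pow_le_of_le n h1
    simpa using this
  refine ⟨natDegree_mul_le_of_le p0 p1, ?_⟩
  rw [coeff_mul_add_eq_of_natDegree_le p0 p1]
  have c0 := coeff_pow_of_natDegree_le (m := m) h0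
  have c1 := coeff_pow_of_natDegree_le (m := n) h1
  rw [mul_one] at c0 c1
  rw [c0, c1]
  simp [rotForm]

/-- Value of the top degree form of `f`. -/
noncomputable def topForm (f : MvPolynomial (Fin 2) ℝ) (d : ℕ) (u v : ℝ) : ℝ :=
  ∑ s ∈ f.support, if s 0 + s 1 = d then f.coeff s * (u ^ s 0 * v ^ s 1) else 0

lemma rotPoly_top (f : MvPolynomial (Fin 2) ℝ) (d : ℕ) (hd : f.totalDegree = d) (a : ℝ) :
    (rotPoly a f).natDegree ≤ d ∧
    (rotPoly a f).coeff d = C (topForm f d (-Real.sin a) (Real.cos a)) := by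
  have hsum : rotPoly a f = ∑ s ∈ f.support,
      C (C (f.coeff s)) * (rotForm a 0 ^ s 0 * rotForm a 1 ^ s 1) := by
    unfold rotPoly
    rw [MvPolynomial.aeval_def, MvPolynomial.eval₂_eq']
    apply Finset.sum_congr rfl
    intro s _
    rw [Fin.prod_univ_two]
    rfl
  have hle : ∀ s ∈ f.support, s 0 + s 1 ≤ d := by
    intro s hs
    have := MvPolynomial.le_totalDegree hs
    rw [hd, Finsupp.sum_fintype _ _ (by simp), Fin.sum_univ_two] at this
    exact this
  rw [hsum]
  constructor
  · apply natDegree_sum_le_of_forall_le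
    intro s hs
    exact (natDegree_C_mul_le _ _).trans ((natDegree_rot_mono a _ _).1.trans (hle s hs))
  · rw [finsetSum_coeff, topForm, map_sum]
    apply Finset.sum_congr rfl
    intro s hs
    rw [coeff_C_mul]
    split_ifs with h
    · rw [C_mul, ← (natDegree_rot_mono a (s 0) (s 1)).2, h]
    · rw [coeff_eq_zero_of_natDegree_lt, mul_zero, C_0]
      have := (natDegree_rot_mono a (s 0) (s 1)).1
      have := hle s hs
      omega

lemma topForm_smul (f : MvPolynomial (Fin 2) ℝ) (d : ℕ) (r u v : ℝ) :
    topForm f d (r * u) (r * v) = r ^ d * topForm f d u v := by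
  unfold topForm
  rw [Finset.mul_sum]
  apply Finset.sum_congr rfl
  intro s _
  split_ifs with h
  · rw [mul_pow, mul_pow, ← h, pow_add]; ring
  · simp

lemma exists_topForm (f : MvPolynomial (Fin 2) ℝ) (d : ℕ) (hd : f.totalDegree = d) (hd1 : 1 ≤ d) :
    ∃ a : ℝ, topForm f d (-Real.sin a) (Real.cos a) ≠ 0 := by
  have hex : ∃ u v : ℝ, topForm f d u v ≠ 0 := by
    by_contra hcon
    push Not at hcon
    set H : MvPolynomial (Fin 2) ℝ := ∑ s ∈ f.support,
      if s 0 + s 1 = d then MvPolynomial.monomial s (f.coeff s) else 0 with hH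
    have h0 : H = 0 := by
      apply MvPolynomial.funext
      intro w
      rw [map_zero, ← hcon (w 0) (w 1), hH, map_sum, topForm]
      apply Finset.sum_congr rfl
      intro s _
      split_ifs
      · rw [MvPolynomial.eval_monomial, Finsupp.prod_fintype _ _ (by simp), Fin.prod_univ_two]
      · simp
    have hf0 : f ≠ 0 := by
      rintro rfl
      simp at hd
      omega
    obtain ⟨s, hs, hsd⟩ := Finset.exists_mem_eq_sup f.support
      (MvPolynomial.support_nonempty.2 hf0) (fun s => s.sum fun _ e => e)
    have hsd' : s 0 + s 1 = d := by
      have : f.totalDegree = s.sum fun _ e => e := hsd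
      rw [hd, Finsupp.sum_fintype _ _ (by simp), Fin.sum_univ_two] at this
      exact this.symm
    have hc : H.coeff s = f.coeff s := by
      rw [hH, MvPolynomial.coeff_sum, Finset.sum_eq_single s]
      · simp [hsd']
      · intro t _ hts
        split_ifs
        · simp [MvPolynomial.coeff_monomial, hts]
        · simp
      · intro h; exact absurd hs h
    rw [h0, MvPolynomial.coeff_zero] at hc
    exact (MvPolynomial.mem_support_iff.1 hs) hc.symm
  obtain ⟨u, v, huv⟩ := hex
  set w : ℂ := ⟨v, -u⟩ with hw
  refine ⟨w.arg, ?_⟩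
  intro h
  apply huv
  have e1 : u = ‖w‖ * (-Real.sin w.arg) := by
    have := Complex.norm_mul_sin_arg w
    rw [mul_neg, this, hw]; simp
  have e2 : v = ‖w‖ * Real.cos w.arg := by
    have := Complex.norm_mul_cos_arg w
    rw [this, hw]
  rw [e1, e2, topForm_smul, h, mul_zero]

end Polynomial.GradIdx

namespace Polynomial.GradIdx

lemma contDiff_evalP {E : Type*} [NormedAddCommGroup E] [NormedSpace ℝ E]
    (p : MvPolynomial (Fin 2) ℝ) (x y : E → ℝ) (n : WithTop ℕ∞) (hx : ContDiff ℝ n x)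
    (hy : ContDiff ℝ n y) : ContDiff ℝ n (fun t => evalP p (x t) (y t)) := by
  unfold evalP
  induction p using MvPolynomial.induction_on with
  | C r => simpa using contDiff_const
  | add p q hp hq => simp only [map_add]; exact hp.add hq
  | mul_X p i hp =>
    simp only [map_mul, MvPolynomial.eval_X]
    refine hp.mul ?_
    obtain rfl | rfl : i = 0 ∨ i = 1 := by omega
    · simpa using hx
    · simpa using hy

lemma continuous_evalP {E : Type*} [TopologicalSpace E]
    (p : MvPolynomial (Fin 2) ℝ) (x y : E → ℝ) (hx : Continuous x)
    (hy : Continuous y) : Continuous (fun t => evalP p (x t) (y t)) := by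
  unfold evalP
  induction p using MvPolynomial.induction_on with
  | C r => simpa using continuous_const
  | add p q hp hq => simp only [map_add]; exact hp.add hq
  | mul_X p i hp =>
    simp only [map_mul, MvPolynomial.eval_X]
    refine hp.mul ?_
    obtain rfl | rfl : i = 0 ∨ i = 1 := by omega
    · simpa using hx
    · simpa using hy

lemma sin_zero_const {A : Type*} [TopologicalSpace A] (S : Set A) (hS : IsPreconnected S)
    (D : A → ℝ) (hD : ContinuousOn D S)
    (h0 : ∀ a ∈ S, Real.sin (D a) = 0) (a b : A) (ha : a ∈ S) (hb : b ∈ S) : D a = D b := by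
  have hfl : ∀ z ∈ S, D z = (⌊(D z + Real.pi / 2) / Real.pi⌋ : ℝ) * Real.pi := by
    intro z hz
    obtain ⟨n, hn⟩ := Real.sin_eq_zero_iff.1 (h0 z hz)
    have hpi := Real.pi_pos
    have : ⌊(D z + Real.pi / 2) / Real.pi⌋ = n := by
      rw [Int.floor_eq_iff, ← hn]
      have e : ((n : ℝ) * Real.pi + Real.pi / 2) / Real.pi = n + 1 / 2 := by
        field_simp
      rw [e]
      constructor <;> linarith
    rw [this, hn]
  rw [hfl a ha, hfl b hb, floor_const S hS (fun z => D z + Real.pi / 2)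
    (hD.add continuousOn_const) ?_ a b ha hb]
  intro z hz
  rw [Real.sin_add_pi_div_two]
  intro hc
  have := Real.sin_sq_add_cos_sq (D z)
  rw [h0 z hz, hc] at this
  norm_num at this

lemma angle_integral (u v θ ρ : ℝ → ℝ) (hu : ContDiff ℝ 1 u) (hv : ContDiff ℝ 1 v)
    (hθ : Continuous θ) (hρ : ∀ t, 0 < ρ t) (hu' : ∀ t, u t = ρ t * Real.cos (θ t))
    (hv' : ∀ t, v t = ρ t * Real.sin (θ t)) (T : ℝ) :
    θ T - θ 0 = ∫ t in (0:ℝ)..T, (u t * deriv v t - v t * deriv u t) / (u t ^ 2 + v t ^ 2) := by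
  have hs : ∀ t, u t ^ 2 + v t ^ 2 ≠ 0 := by
    intro t
    have : u t ^ 2 + v t ^ 2 = ρ t ^ 2 := by
      rw [hu', hv']
      linear_combination (ρ t) ^ 2 * Real.sin_sq_add_cos_sq (θ t)
    rw [this]
    exact pow_ne_zero _ (hρ t).ne'
  have cu := hu.continuous
  have cv := hv.continuous
  have cu' := hu.continuous_deriv le_rfl
  have cv' := hv.continuous_deriv le_rfl
  have du : ∀ t, HasDerivAt u (deriv u t) t :=
    fun t => ((hu.differentiable (by simp)) t).hasDerivAt
  have dv : ∀ t, HasDerivAt v (deriv v t) t :=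
    fun t => ((hv.differentiable (by simp)) t).hasDerivAt
  set q : ℝ → ℝ := fun t => (u t * deriv v t - v t * deriv u t) / (u t ^ 2 + v t ^ 2) with hq
  set m : ℝ → ℝ := fun t => (u t * deriv u t + v t * deriv v t) / (u t ^ 2 + v t ^ 2) with hm
  have cq : Continuous q := by
    refine Continuous.div ?_ ?_ hs <;> fun_prop
  have cm : Continuous m := by
    refine Continuous.div ?_ ?_ hs <;> fun_prop
  have dphi : ∀ t, HasDerivAt (fun t => θ 0 + ∫ s in (0:ℝ)..t, q s) (q t) t :=
    fun t => ((cq.integral_hasStrictDerivAt 0 t).hasDerivAt).const_add _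
  have dM : ∀ t, HasDerivAt (fun t => ∫ s in (0:ℝ)..t, m s) (m t) t :=
    fun t => ((cm.integral_hasStrictDerivAt 0 t).hasDerivAt)
  set φ : ℝ → ℝ := fun t => θ 0 + ∫ s in (0:ℝ)..t, q s with hφ
  set Mi : ℝ → ℝ := fun t => ∫ s in (0:ℝ)..t, m s with hMi
  have dW : ∀ t, HasDerivAt
      (fun t => (v t * Real.cos (φ t) - u t * Real.sin (φ t)) * Real.exp (-Mi t)) 0 t := by
    intro t
    have h := (((dv t).mul (dphi t).cos).sub ((du t).mul (dphi t).sin)).mul ((dM t).neg.exp)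
    refine HasDerivAt.congr_deriv h ?_
    have e1 : q t * (u t ^ 2 + v t ^ 2) = u t * deriv v t - v t * deriv u t :=
      div_mul_cancel₀ _ (hs t)
    have e2 : m t * (u t ^ 2 + v t ^ 2) = u t * deriv u t + v t * deriv v t :=
      div_mul_cancel₀ _ (hs t)
    have k1 : deriv v t = q t * u t + m t * v t := by
      apply mul_right_cancel₀ (hs t)
      linear_combination (-u t) * e1 - v t * e2
    have k2 : deriv u t = m t * u t - q t * v t := by
      apply mul_right_cancel₀ (hs t)
      linear_combination (v t) * e1 - u t * e2
    simp only [Pi.mul_apply, Pi.sub_apply, Pi.neg_apply]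
    rw [k1, k2]
    ring
  have hconst := is_const_of_deriv_eq_zero (fun t => (dW t).differentiableAt)
    (fun t => (dW t).deriv)
  have φ0 : φ 0 = θ 0 := by simp [hφ]
  have hsin : ∀ t, Real.sin (θ t - φ t) = 0 := by
    intro t
    have h := hconst t 0
    simp only [φ0] at h
    rw [hu' 0, hv' 0, show (ρ 0 * Real.sin (θ 0) * Real.cos (θ 0) -
      ρ 0 * Real.cos (θ 0) * Real.sin (θ 0)) = 0 by ring, zero_mul] at h
    rcases mul_eq_zero.1 h with h | h
    · rw [hu' t, hv' t] at h
      rw [Real.sin_sub]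
      apply mul_left_cancel₀ (hρ t).ne'
      linear_combination h
    · exact absurd h (Real.exp_pos _).ne'
  have cφ : Continuous φ := continuous_iff_continuousAt.2 fun t => (dphi t).continuousAt
  have hD := sin_zero_const Set.univ isPreconnected_univ (fun t => θ t - φ t)
    (hθ.sub cφ).continuousOn (fun t _ => hsin t) T 0 trivial trivial
  simp only [φ0] at hD
  have : φ T = θ 0 + ∫ s in (0:ℝ)..T, q s := rfl
  linarith

lemma exists_lift (f : MvPolynomial (Fin 2) ℝ) (R : ℝ) (hR : 0 < R)
    (hadm : ∀ p : ℝ × ℝ, IsCriticalPt f p → p.1 ^ 2 + p.2 ^ 2 < R ^ 2) :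
    ∃ θ : ℝ × ℝ → ℝ, Continuous θ ∧ ∀ r t, R ≤ r → ∃ ρ > 0,
      evalP (MvPolynomial.pderiv 0 f) (r * Real.cos t) (r * Real.sin t) =
        ρ * Real.cos (θ (r, t)) ∧
      evalP (MvPolynomial.pderiv 1 f) (r * Real.cos t) (r * Real.sin t) =
        ρ * Real.sin (θ (r, t)) := by
  set U : ℝ × ℝ → ℝ := fun p => evalP (MvPolynomial.pderiv 0 f)
    (max p.1 R * Real.cos p.2) (max p.1 R * Real.sin p.2) with hU
  set V : ℝ × ℝ → ℝ := fun p => evalP (MvPolynomial.pderiv 1 f)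
    (max p.1 R * Real.cos p.2) (max p.1 R * Real.sin p.2) with hV
  have cU : Continuous U := continuous_evalP _ _ _ (by fun_prop) (by fun_prop)
  have cV : Continuous V := continuous_evalP _ _ _ (by fun_prop) (by fun_prop)
  set h : C(ℝ × ℝ, ℂ) := ⟨fun p => (U p : ℂ) + V p * Complex.I, by fun_prop⟩ with hh
  have hne : ∀ p, h p ≠ 0 := by
    intro p hp
    have hre : U p = 0 := by simpa [hh] using congrArg Complex.re hp
    have him : V p = 0 := by simpa [hh] using congrArg Complex.im hp
    have := hadm (max p.1 R * Real.cos p.2, max p.1 R * Real.sin p.2) ⟨hre, him⟩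
    simp only at this
    have e : (max p.1 R * Real.cos p.2) ^ 2 + (max p.1 R * Real.sin p.2) ^ 2 = (max p.1 R) ^ 2 := by
      linear_combination (max p.1 R) ^ 2 * Real.sin_sq_add_cos_sq p.2
    rw [e] at this
    have h2 : R ≤ max p.1 R := le_max_right _ _
    nlinarith
  obtain ⟨L, ⟨-, hL⟩, -⟩ := Complex.isCoveringMapOn_exp.existsUnique_continuousMap_lifts h
    (a₀ := (0, 0)) (e₀ := Complex.log (h (0, 0))) (Complex.exp_log (hne _))
    (fun p => by simpa using hne p)
  refine ⟨fun p => (L p).im, by fun_prop, ?_⟩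
  intro r t hr
  have hx : Complex.exp (L (r, t)) = h (r, t) := congrFun hL (r, t)
  have hre := congrArg Complex.re hx
  have him := congrArg Complex.im hx
  rw [Complex.exp_re] at hre
  rw [Complex.exp_im] at him
  refine ⟨Real.exp (L (r, t)).re, Real.exp_pos _, ?_, ?_⟩
  · rw [hre]; simp [hh, hU, max_eq_left hr]
  · rw [him]; simp [hh, hV, max_eq_left hr]

lemma lift_period (f : MvPolynomial (Fin 2) ℝ) (R : ℝ) (hR : 0 < R) (θ : ℝ × ℝ → ℝ)
    (hθ : Continuous θ) (h : ∀ r t, R ≤ r → ∃ ρ > 0,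
      evalP (MvPolynomial.pderiv 0 f) (r * Real.cos t) (r * Real.sin t) =
        ρ * Real.cos (θ (r, t)) ∧
      evalP (MvPolynomial.pderiv 1 f) (r * Real.cos t) (r * Real.sin t) =
        ρ * Real.sin (θ (r, t))) (r t : ℝ) (hr : R ≤ r) :
    θ (r, t + 2 * Real.pi) = θ (r, t) + 2 * Real.pi * gradIndex f R := by
  have hD := sin_zero_const {p : ℝ × ℝ | R ≤ p.1}
    ((convex_halfSpace_ge (f := fun p : ℝ × ℝ => p.1) (LinearMap.fst ℝ ℝ ℝ).isLinear R).isPreconnected)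
    (fun p => θ (p.1, p.2 + 2 * Real.pi) - θ p) (by fun_prop) ?_ (r, t) (R, 0) hr (le_refl R)
  · have hA := angle_integral (uFun f R) (vFun f R) (fun t => θ (R, t))
      (fun t => (h R t le_rfl).choose)
      (contDiff_evalP _ _ _ _ (contDiff_const.mul Real.contDiff_cos)
        (contDiff_const.mul Real.contDiff_sin))
      (contDiff_evalP _ _ _ _ (contDiff_const.mul Real.contDiff_cos)
        (contDiff_const.mul Real.contDiff_sin)) (by fun_prop)
      (fun t => (h R t le_rfl).choose_spec.1) (fun t => (h R t le_rfl).choose_spec.2.1)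
      (fun t => (h R t le_rfl).choose_spec.2.2) (2 * Real.pi)
    have hg : 2 * Real.pi * gradIndex f R = θ (R, 2 * Real.pi) - θ (R, 0) := by
      rw [hA]
      unfold gradIndex
      have := Real.pi_pos
      field_simp
    rw [hg]
    simp only [zero_add] at hD
    linarith
  · rintro ⟨r, t⟩ hr
    simp only [Set.mem_ofPred_eq] at hr
    obtain ⟨ρ, hρ, h1, h2⟩ := h r t hr
    obtain ⟨ρ', hρ', h1', h2'⟩ := h r (t + 2 * Real.pi) hr
    rw [Real.cos_add_two_pi, Real.sin_add_two_pi] at h1' h2'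
    simp only
    rw [Real.sin_sub]
    have e1 := h1.symm.trans h1'
    have e2 := h2.symm.trans h2'
    apply mul_left_cancel₀ (mul_pos hρ hρ').ne'
    generalize Real.cos (θ (r, t)) = c at *
    generalize Real.sin (θ (r, t)) = s at *
    linear_combination ρ' * Real.sin (θ (r, t + 2 * Real.pi)) * e1 -
      ρ' * Real.cos (θ (r, t + 2 * Real.pi)) * e2

lemma polar_arctan (x y : ℝ) (hx : 0 < x) :
    √(x ^ 2 + y ^ 2) * Real.cos (Real.arctan (y / x)) = x ∧
    √(x ^ 2 + y ^ 2) * Real.sin (Real.arctan (y / x)) = y := by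
  have e : √(x ^ 2 + y ^ 2) = x * √(1 + (y / x) ^ 2) := by
    rw [show x ^ 2 + y ^ 2 = x ^ 2 * (1 + (y / x) ^ 2) by field_simp,
      Real.sqrt_mul (by positivity), Real.sqrt_sq hx.le]
  have hp : 0 < √(1 + (y / x) ^ 2) := Real.sqrt_pos.2 (by positivity)
  rw [Real.cos_arctan, Real.sin_arctan, e]
  constructor
  · field_simp
  · field_simp

end Polynomial.GradIdx

namespace Polynomial.GradIdx

/-- `θ` is an angle function of the gradient of `f` outside the disk of radius `R`. -/
def IsAngle (f : MvPolynomial (Fin 2) ℝ) (R : ℝ) (θ : ℝ × ℝ → ℝ) : Prop :=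
  ∀ r t, R ≤ r → ∃ ρ > 0,
      evalP (MvPolynomial.pderiv 0 f) (r * Real.cos t) (r * Real.sin t) =
        ρ * Real.cos (θ (r, t)) ∧
      evalP (MvPolynomial.pderiv 1 f) (r * Real.cos t) (r * Real.sin t) =
        ρ * Real.sin (θ (r, t))

lemma frame_eval (f : MvPolynomial (Fin 2) ℝ) (R : ℝ) (θ : ℝ × ℝ → ℝ) (h : IsAngle f R θ)
    (a r t x y : ℝ) (hr : R ≤ r) (hx : r * Real.cos t = x) (hy : r * Real.sin t = y) :
    ∃ ρ > 0, (C (C (Real.cos a)) * rotPoly a (MvPolynomial.pderiv 0 f) +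
      C (C (Real.sin a)) * rotPoly a (MvPolynomial.pderiv 1 f)).evalEval x y =
        ρ * Real.cos (θ (r, t + a) - a) ∧
      (rotPoly a f).derivative.evalEval x y = ρ * Real.sin (θ (r, t + a) - a) := by
  obtain ⟨ρ, hρ, h1, h2⟩ := h r (t + a) hr
  have ex : r * Real.cos (t + a) = x * Real.cos a - y * Real.sin a := by
    rw [Real.cos_add, ← hx, ← hy]; ring
  have ey : r * Real.sin (t + a) = x * Real.sin a + y * Real.cos a := by
    rw [Real.sin_add, ← hx, ← hy]; ring
  rw [ex, ey] at h1 h2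
  refine ⟨ρ, hρ, ?_, ?_⟩
  · rw [evalEval_add, evalEval_mul, evalEval_mul, evalEval_rotPoly, evalEval_rotPoly, h1, h2,
      Real.cos_sub, evalEval_C, evalEval_C, eval_C, eval_C]
    ring
  · rw [derivative_rotPoly, evalEval_add, evalEval_mul, evalEval_mul, evalEval_rotPoly,
      evalEval_rotPoly, h1, h2, Real.sin_sub, evalEval_C, evalEval_C, eval_C, eval_C]
    ring

lemma frame_right (f : MvPolynomial (Fin 2) ℝ) (d : ℕ) (hd : f.totalDegree = d) (hd1 : 1 ≤ d)
    (R : ℝ) (hR : 0 < R) (θ : ℝ × ℝ → ℝ) (hθ : Continuous θ) (h : IsAngle f R θ) (a : ℝ)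
    (ha : topForm f d (-Real.sin a) (Real.cos a) ≠ 0) :
    ∃ Y0, ∀ Y ≥ Y0,
      ⌊(θ (√(R ^ 2 + Y ^ 2), Real.arctan (Y / R) + a) - a) / Real.pi⌋ -
        ⌊(θ (√(R ^ 2 + Y ^ 2), -Real.arctan (Y / R) + a) - a) / Real.pi⌋ ≤
        max 1 ((d : ℤ) - 3) := by
  obtain ⟨hdeg, hcoef⟩ := rotPoly_top f d hd a
  set T : ℝ → ℝ → ℝ := fun x y => θ (√(x ^ 2 + y ^ 2), Real.arctan (y / x) + a) - a with hT
  have hTe : ∀ Y, T R (-Y) = θ (√(R ^ 2 + Y ^ 2), -Real.arctan (Y / R) + a) - a := by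
    intro Y
    simp only [hT]
    rw [neg_sq, neg_div, Real.arctan_neg]
  have hval : ∀ x y, R ≤ x → ∃ ρ > 0,
      (C (C (Real.cos a)) * rotPoly a (MvPolynomial.pderiv 0 f) +
      C (C (Real.sin a)) * rotPoly a (MvPolynomial.pderiv 1 f)).evalEval x y =
        ρ * Real.cos (T x y) ∧
      (rotPoly a f).derivative.evalEval x y = ρ * Real.sin (T x y) := by
    intro x y hx
    have hx0 : 0 < x := hR.trans_le hx
    obtain ⟨p1, p2⟩ := polar_arctan x y hx0
    refine frame_eval f R θ h a _ _ x y ?_ p1 p2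
    apply hx.trans
    apply Real.le_sqrt_of_sq_le
    nlinarith [sq_nonneg y]
  by_cases h3 : 3 ≤ d
  · obtain ⟨n, rfl⟩ := Nat.exists_eq_add_of_le' h3
    obtain ⟨Y0, hY0⟩ := right_bound_three n _ ha (rotPoly a f) _ hdeg hcoef
      (coeff_rotPoly_deriv a f) R hR T (by
        have c1 : ContinuousOn (fun p : ℝ × ℝ => p.2 / p.1) {p | R ≤ p.1} := by
          refine continuousOn_snd.div continuousOn_fst ?_
          intro p hp
          exact (hR.trans_le hp).ne'
        have c2 : ContinuousOn (fun p : ℝ × ℝ =>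
            ((√(p.1 ^ 2 + p.2 ^ 2), Real.arctan (p.2 / p.1) + a) : ℝ × ℝ)) {p | R ≤ p.1} := by
          refine ContinuousOn.prodMk (by fun_prop) ?_
          exact (Real.continuous_arctan.comp_continuousOn c1).add continuousOn_const
        exact (hθ.comp_continuousOn c2).sub continuousOn_const) hval
    refine ⟨Y0, fun Y hY => ?_⟩
    have := hY0 Y hY
    rw [hTe] at this
    refine this.trans (le_trans ?_ (le_max_right _ _))
    push_cast
    omega
  · refine ⟨0, fun Y hY => ?_⟩
    have := right_bound_one d hd1 _ ha (rotPoly a f) hdeg hcoef R (T R)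
      (by simp only [hT]; fun_prop)
      (fun y => by
        obtain ⟨ρ, hρ, -, h2⟩ := hval R y le_rfl
        exact ⟨ρ, hρ, h2⟩) Y hY
    rw [hTe] at this
    refine this.trans (le_trans ?_ (le_max_left _ _))
    omega

lemma frame_top (f : MvPolynomial (Fin 2) ℝ) (d : ℕ) (hd : f.totalDegree = d) (hd1 : 1 ≤ d)
    (R : ℝ) (hR : 0 < R) (θ : ℝ × ℝ → ℝ) (hθ : Continuous θ) (h : IsAngle f R θ) (a : ℝ)
    (ha : topForm f d (-Real.sin a) (Real.cos a) ≠ 0) :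
    ∃ Y0, ∀ Y ≥ Y0,
      ⌊(θ (√(R ^ 2 + Y ^ 2), Real.pi - Real.arctan (Y / R) + a) - a) / Real.pi⌋ =
        ⌊(θ (√(R ^ 2 + Y ^ 2), Real.arctan (Y / R) + a) - a) / Real.pi⌋ := by
  obtain ⟨hdeg, hcoef⟩ := rotPoly_top f d hd a
  obtain ⟨m, rfl⟩ := Nat.exists_eq_add_of_le' hd1
  obtain ⟨Y0, hY0, hfar⟩ := far_sign (rotPoly a f).derivative m
    ((natDegree_derivative_le _).trans (by omega))
    (topForm f (m + 1) (-Real.sin a) (Real.cos a) * (m + 1)) (by positivity)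
    (by rw [coeff_derivative, hcoef]; simp) R
  refine ⟨Y0, fun Y hY => ?_⟩
  have hYpos : 0 < Y := hY0.trans_le hY
  obtain ⟨p1, p2⟩ := polar_arctan R Y hR
  have hτ0 : 0 < Real.arctan (Y / R) := Real.arctan_pos.2 (by positivity)
  have hτ1 := Real.arctan_lt_pi_div_two (Y / R)
  have hr2 : √(R ^ 2 + Y ^ 2) ^ 2 = R ^ 2 + Y ^ 2 := Real.sq_sqrt (by positivity)
  have hr0 : 0 ≤ √(R ^ 2 + Y ^ 2) := Real.sqrt_nonneg _
  have hrR : R ≤ √(R ^ 2 + Y ^ 2) := Real.le_sqrt_of_sq_le (by nlinarith)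
  generalize √(R ^ 2 + Y ^ 2) = r at *
  generalize Real.arctan (Y / R) = τ at *
  refine floor_const (Set.Icc τ (Real.pi - τ)) isPreconnected_Icc
    (fun t => θ (r, t + a) - a) (by fun_prop) ?_ _ _ ?_ ?_
  · intro t ht
    obtain ⟨ρ, hρ, -, h2⟩ := frame_eval f R θ h a r t _ _ hrR rfl rfl
    have c1 : Real.cos t ≤ Real.cos τ :=
      Real.cos_le_cos_of_nonneg_of_le_pi hτ0.le (by linarith [ht.2]) ht.1
    have c2 : -Real.cos τ ≤ Real.cos t := by
      rw [← Real.cos_pi_sub]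
      exact Real.cos_le_cos_of_nonneg_of_le_pi (by linarith [ht.1]) (by linarith) ht.2
    have s0 : 0 ≤ Real.sin t :=
      Real.sin_nonneg_of_nonneg_of_le_pi (by linarith [ht.1]) (by linarith [ht.2])
    have hxK : |r * Real.cos t| ≤ R := by
      rw [abs_le, ← p1]
      constructor <;> nlinarith
    have hyK : Y0 ≤ |r * Real.sin t| := by
      apply hY.trans
      rw [abs_of_nonneg (mul_nonneg hr0 s0)]
      apply le_of_sq_le_sq ?_ (mul_nonneg hr0 s0)
      have h1 : (r * Real.cos t) ^ 2 ≤ R ^ 2 := sq_le_sq' (abs_le.1 hxK).1 (abs_le.1 hxK).2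
      have h2 : (r * Real.sin t) ^ 2 + (r * Real.cos t) ^ 2 = r ^ 2 := by
        linear_combination r ^ 2 * Real.sin_sq_add_cos_sq t
      linarith
    have hlt := hfar _ hxK _ hyK
    rw [h2] at hlt
    intro hz
    rw [hz] at hlt
    simp at hlt
  · constructor <;> linarith
  · constructor <;> linarith

lemma floor_shift (z a : ℝ) :
    ⌊(z - (a + Real.pi)) / Real.pi⌋ = ⌊(z - a) / Real.pi⌋ - 1 := by
  rw [← Int.floor_sub_one]
  congr 1
  have := Real.pi_pos
  field_simp
  ring

lemma floor_period (z a : ℝ) (i : ℤ) :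
    ⌊(z + 2 * Real.pi * i - a) / Real.pi⌋ = ⌊(z - a) / Real.pi⌋ + 2 * i := by
  rw [← Int.floor_add_intCast]
  congr 1
  have := Real.pi_pos
  push_cast
  field_simp
  ring

end Polynomial.GradIdx

open Polynomial.GradIdx

theorem index_le_max_one_degree_sub_three
    (f : MvPolynomial (Fin 2) ℝ) (d : ℕ) (hd : f.totalDegree = d) (hd1 : 1 ≤ d)
    (hfin : {p : ℝ × ℝ | IsCriticalPt f p}.Finite)
    (R : ℝ) (hR : 0 < R)
    (hadm : ∀ p : ℝ × ℝ, IsCriticalPt f p → p.1 ^ 2 + p.2 ^ 2 < R ^ 2)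
    (i : ℤ) (hi : (i : ℝ) = gradIndex f R) :
    i ≤ max 1 ((d : ℤ) - 3) := by
  obtain ⟨θ, hθ, h⟩ := exists_lift f R hR hadm
  have hper := lift_period f R hR θ hθ h
  obtain ⟨a, ha⟩ := exists_topForm f d hd hd1
  have ha' : topForm f d (-Real.sin (a + Real.pi)) (Real.cos (a + Real.pi)) ≠ 0 := by
    have e := topForm_smul f d (-1) (-Real.sin a) (Real.cos a)
    rw [Real.sin_add_pi, Real.cos_add_pi]
    rw [show - -Real.sin a = (-1) * (-Real.sin a) by ring,
      show -Real.cos a = (-1) * Real.cos a by ring, e]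
    exact mul_ne_zero (pow_ne_zero _ (by norm_num)) ha
  obtain ⟨Y1, h1⟩ := frame_right f d hd hd1 R hR θ hθ h a ha
  obtain ⟨Y2, h2⟩ := frame_right f d hd hd1 R hR θ hθ h (a + Real.pi) ha'
  obtain ⟨Y3, h3⟩ := frame_top f d hd hd1 R hR θ hθ h a ha
  obtain ⟨Y4, h4⟩ := frame_top f d hd hd1 R hR θ hθ h (a + Real.pi) ha'
  set Y := max (max Y1 Y2) (max Y3 Y4) with hY
  have k1 := h1 Y ((le_max_left _ _).trans (le_max_left _ _))
  have k2 := h2 Y ((le_max_right _ _).trans (le_max_left _ _))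
  have k3 := h3 Y ((le_max_left _ _).trans (le_max_right _ _))
  have k4 := h4 Y ((le_max_right _ _).trans (le_max_right _ _))
  have hrR : R ≤ √(R ^ 2 + Y ^ 2) := Real.le_sqrt_of_sq_le (by nlinarith [sq_nonneg Y])
  generalize √(R ^ 2 + Y ^ 2) = r at *
  generalize Real.arctan (Y / R) = τ at *
  rw [floor_shift, floor_shift] at k2 k4
  have hp := hper r (-τ + a) hrR
  rw [← hi] at hp
  rw [show Real.pi - τ + (a + Real.pi) = -τ + a + 2 * Real.pi by ring, hp, floor_period] at k4
  rw [show -τ + (a + Real.pi) = Real.pi - τ + a by ring] at k2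
  generalize max 1 ((d : ℤ) - 3) = M at *
  omega
end

section
/- Let f : ℝ² → ℝ be a nonconstant real polynomial function in two variables with only finitely many critical points. If every level set {(x,y) : f(x,y) = t}, t ∈ ℝ, is compact, then for every admissible radius R the index i of grad f around the circle of radius R equals 1. -/
open MvPolynomial Filter

/-- The (complex) logarithmic variation of a loop over `[0, 2π]`. -/
noncomputable def windC (γ : ℝ → ℂ) : ℂ :=
  ∫ t in (0:ℝ)..(2 * Real.pi), deriv γ t / γ t

/-- If the straight segment from `a` to `b` avoids `0`, then `b / a` lies in the slit plane. -/
lemma slit_of_segment {a b : ℂ}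
    (h : ∀ s ∈ Set.Icc (0:ℝ) 1, (1 - (s:ℂ)) * a + s * b ≠ 0) :
    a ≠ 0 ∧ b ≠ 0 ∧ b / a ∈ Complex.slitPlane := by
  have ha : a ≠ 0 := by simpa using h 0 (by simp)
  have hb : b ≠ 0 := by simpa using h 1 (by simp)
  refine ⟨ha, hb, ?_⟩
  by_contra hc
  rw [Complex.mem_slitPlane_iff] at hc
  push Not at hc
  obtain ⟨h1, h2⟩ := hc
  set l : ℝ := -(b / a).re with hl
  have hl0 : 0 ≤ l := by linarith
  have hba : b = -(l:ℂ) * a := by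
    have : b / a = -(l:ℂ) := by
      apply Complex.ext <;> simp [hl, h2]
    rw [← this]; field_simp
  have hl1 : (1:ℝ) + l ≠ 0 := by positivity
  have hl2 : (1:ℂ) + l ≠ 0 := by exact_mod_cast hl1
  refine h (1 / (1 + l)) ⟨by positivity, ?_⟩ ?_
  · rw [div_le_one (by positivity)]; linarith
  · rw [hba]; push_cast; field_simp; ring

/-- Two loops whose pointwise ratio lies in the slit plane have the same winding. -/
lemma windC_eq {γ₀ γ₁ : ℝ → ℂ} (h0 : ContDiff ℝ 1 γ₀) (h1 : ContDiff ℝ 1 γ₁)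
    (p0 : γ₀ 0 = γ₀ (2 * Real.pi)) (p1 : γ₁ 0 = γ₁ (2 * Real.pi))
    (h : ∀ t ∈ Set.Icc (0:ℝ) (2 * Real.pi),
      γ₀ t ≠ 0 ∧ γ₁ t ≠ 0 ∧ γ₁ t / γ₀ t ∈ Complex.slitPlane) :
    windC γ₀ = windC γ₁ := by
  have hpi : (0:ℝ) ≤ 2 * Real.pi := by positivity
  have hu : Set.uIcc (0:ℝ) (2 * Real.pi) = Set.Icc 0 (2 * Real.pi) := Set.uIcc_of_le hpi
  have int0 : IntervalIntegrable (fun t => deriv γ₀ t / γ₀ t) MeasureTheory.volume 0 (2 * Real.pi) := by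
    apply ContinuousOn.intervalIntegrable
    rw [hu]
    exact (h0.continuous_deriv le_rfl).continuousOn.div h0.continuous.continuousOn
      (fun t ht => (h t ht).1)
  have int1 : IntervalIntegrable (fun t => deriv γ₁ t / γ₁ t) MeasureTheory.volume 0 (2 * Real.pi) := by
    apply ContinuousOn.intervalIntegrable
    rw [hu]
    exact (h1.continuous_deriv le_rfl).continuousOn.div h1.continuous.continuousOn
      (fun t ht => (h t ht).2.1)
  have key : ∫ t in (0:ℝ)..(2 * Real.pi), (deriv γ₁ t / γ₁ t - deriv γ₀ t / γ₀ t) =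
      Complex.log (γ₁ (2 * Real.pi) / γ₀ (2 * Real.pi)) - Complex.log (γ₁ 0 / γ₀ 0) := by
    apply intervalIntegral.integral_eq_sub_of_hasDerivAt (f := fun t => Complex.log (γ₁ t / γ₀ t))
    · intro t ht
      rw [hu] at ht
      obtain ⟨a0, a1, as⟩ := h t ht
      have d0 := (h0.differentiable one_ne_zero t).hasDerivAt
      have d1 := (h1.differentiable one_ne_zero t).hasDerivAt
      have := (d1.div d0 a0).clog_real as
      convert! this using 1
      simp only [Pi.div_apply]
      field_simp
    · exact int1.sub int0
  rw [← p0, ← p1, sub_self, intervalIntegral.integral_sub int1 int0, sub_eq_zero] at key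
  exact key.symm

/-- The standard parametrisation of the circle. -/
noncomputable def circ (t : ℝ) : ℂ := Complex.exp (t * Complex.I)

lemma circ_contDiff : ContDiff ℝ 1 circ := by
  unfold circ
  have : ContDiff ℝ 1 (fun t : ℝ => (t : ℂ)) := Complex.ofRealCLM.contDiff
  fun_prop

lemma circ_per : circ 0 = circ (2 * Real.pi) := by
  simp [circ]

lemma circ_norm (t : ℝ) : ‖circ t‖ = 1 := by
  simp [circ, Complex.norm_exp_ofReal_mul_I]

lemma circ_ne (t : ℝ) : circ t ≠ 0 := Complex.exp_ne_zero _

lemma windC_circ {ρ : ℝ} (hρ : 0 < ρ) :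
    windC (fun t => (ρ:ℂ) * circ t) = 2 * Real.pi * Complex.I := by
  have hρ' : (ρ:ℂ) ≠ 0 := by exact_mod_cast hρ.ne'
  have : ∀ t : ℝ, deriv (fun t => (ρ:ℂ) * circ t) t / ((ρ:ℂ) * circ t) = Complex.I := by
    intro t
    have h1 : HasDerivAt (fun t : ℝ => (t:ℂ) * Complex.I) (1 * Complex.I) t :=
      (Complex.ofRealCLM.hasDerivAt (x := t)).mul_const Complex.I
    have h2 : HasDerivAt (fun t => (ρ:ℂ) * circ t) (ρ * (circ t * (1 * Complex.I))) t :=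
      (h1.cexp).const_mul _
    rw [h2.deriv]
    have := circ_ne t
    field_simp
  unfold windC
  simp_rw [this]
  simp

lemma windC_smul {ε : ℝ} (hε : 0 < ε) (γ : ℝ → ℂ) (hγ : Differentiable ℝ γ) :
    windC (fun t => (ε:ℂ) * γ t) = windC γ := by
  have hρ' : (ε:ℂ) ≠ 0 := by exact_mod_cast hε.ne'
  unfold windC
  congr 1
  ext t
  rw [((hγ t).hasDerivAt.const_mul (ε:ℂ)).deriv]
  rw [mul_div_mul_left _ _ hρ']

/-- The winding of a vector field does not depend on the radius. -/
lemma windC_radius {G : ℂ → ℂ} (hG : ContDiff ℝ 1 G) {R : ℝ}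
    (hne : ∀ z, R ≤ ‖z‖ → G z ≠ 0) {ρ : ℝ} (hρ : R ≤ ρ) :
    windC (fun t => G (R * circ t)) = windC (fun t => G (ρ * circ t)) := by
  have hc := circ_contDiff
  have hcont : ∀ r : ℝ, ContDiff ℝ 1 (fun t => G (r * circ t)) := fun r => by fun_prop
  have hn : ∀ r : ℝ, R ≤ r → ∀ t, G (r * circ t) ≠ 0 := by
    intro r hr t
    apply hne
    rw [norm_mul, circ_norm, Complex.norm_real, mul_one, Real.norm_eq_abs]
    exact hr.trans (le_abs_self r)
  have hloc : IsLocallyConstant (fun r : Set.Ici R => windC (fun t => G ((r:ℝ) * circ t))) := by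
    rw [IsLocallyConstant.iff_eventually_eq]
    intro r
    have h1 : ∀ᶠ r' : ℝ in nhds (r:ℝ), ∀ t ∈ Set.Icc (0:ℝ) (2 * Real.pi),
        G (r' * circ t) / G ((r:ℝ) * circ t) ∈ Complex.slitPlane := by
      apply isCompact_Icc.eventually_forall_of_forall_eventually
      intro t _
      have hGc := hG.continuous
      have hcc := hc.continuous
      have : ContinuousAt (fun p : ℝ × ℝ => G (p.1 * circ p.2) / G ((r:ℝ) * circ p.2)) ((r:ℝ), t) := by
        apply ContinuousAt.div
        · fun_prop
        · fun_prop
        · exact hn r r.2 t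
      apply this.eventually_mem
      apply Complex.isOpen_slitPlane.mem_nhds
      simp [div_self (hn r r.2 t)]
    have h2 := (continuous_subtype_val.tendsto r).eventually h1
    filter_upwards [h2] with r' hr'
    symm
    apply windC_eq (hcont _) (hcont _)
    · simp only [circ_per]
    · simp only [circ_per]
    · intro t ht
      exact ⟨hn r r.2 t, hn r' r'.2 t, hr' t ht⟩
  have : PreconnectedSpace (Set.Ici R) := Subtype.preconnectedSpace isPreconnected_Ici
  exact hloc.apply_eq_of_preconnectedSpace ⟨R, le_refl R⟩ ⟨ρ, hρ⟩

lemma sublevel_bdd {F : ℂ → ℝ} (hF : Tendsto F (cocompact ℂ) atTop) (C : ℝ) :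
    ∃ M : ℝ, 0 < M ∧ ∀ z, F z ≤ C → ‖z‖ < M := by
  have h := hF.eventually (eventually_gt_atTop C)
  rw [← Metric.cobounded_eq_cocompact] at h
  obtain ⟨M, -, hM⟩ := (Filter.hasBasis_cobounded_norm (E := ℂ)).eventually_iff.1 h
  refine ⟨max M 1, by positivity, fun z hz => ?_⟩
  by_contra hc
  push Not at hc
  have := hM (x := z) ((le_max_left _ _).trans hc)
  linarith

/-- Descent estimate for one (partial) gradient step. -/
lemma descent {F : ℂ → ℝ} {G : ℂ → ℂ} (hG : ContDiff ℝ 1 G)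
    (hgrad : ∀ (z w : ℂ) (s : ℝ), HasDerivAt (fun s : ℝ => F (z + s * w))
      ((G (z + s * w)).re * w.re + (G (z + s * w)).im * w.im) s)
    (hF : Tendsto F (cocompact ℂ) atTop) (C : ℝ) :
    ∃ ε : ℝ, 0 < ε ∧ ∀ y, F y ≤ C → ∀ s ∈ Set.Icc (0:ℝ) 1,
      F (y - (s * ε : ℝ) * G y) ≤ F y - s * ε / 2 * ‖G y‖ ^ 2 := by
  obtain ⟨M, hM0, hM⟩ := sublevel_bdd hF C
  obtain ⟨L, hL⟩ := hG.contDiffOn.exists_lipschitzOnWith one_ne_zero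
    (convex_closedBall (0:ℂ) (M + 1)) (isCompact_closedBall (0:ℂ) (M + 1))
  obtain ⟨A, hA⟩ := (isCompact_closedBall (0:ℂ) (M + 1)).exists_bound_of_continuousOn
    hG.continuous.continuousOn
  have hL0 : (0:ℝ) ≤ L := L.2
  set ε : ℝ := 1 / (2 * (L:ℝ) + |A| + 1) with hε
  have hden : 0 < 2 * (L:ℝ) + |A| + 1 := by positivity
  have hε0 : 0 < ε := by positivity
  have hε1 : ε * (2 * (L:ℝ) + |A| + 1) = 1 := by rw [hε]; field_simp
  have hεA : ε * |A| ≤ 1 := by nlinarith [abs_nonneg A]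
  have hεL : ε * L ≤ 1 / 2 := by nlinarith [abs_nonneg A]
  refine ⟨ε, hε0, fun y hy s hs => ?_⟩
  have hyM := hM y hy
  have hyA : ‖G y‖ ≤ |A| := (hA y (by simp; linarith)).trans (le_abs_self A)
  rcases eq_or_lt_of_le hs.1 with h0 | h0
  · simp [← h0]
  have hd := hgrad y (-(ε:ℂ) * G y)
  obtain ⟨c, hc, hce⟩ := exists_hasDerivAt_eq_slope (fun s : ℝ => F (y + s * (-(ε:ℂ) * G y)))
    _ h0 (fun x _ => (hd x).continuousAt.continuousWithinAt) (fun x _ => hd x)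
  simp only [sub_zero, Complex.ofReal_zero, zero_mul, add_zero] at hce
  rw [eq_div_iff h0.ne'] at hce
  have e1 : y - (s * ε : ℝ) * G y = y + s * (-(ε:ℂ) * G y) := by push_cast; ring
  rw [e1]
  set y' := y + c * (-(ε:ℂ) * G y) with hy'
  have hc1 : c ≤ 1 := hc.2.le.trans hs.2
  have hn : ‖y' - y‖ = c * ε * ‖G y‖ := by
    rw [hy']
    simp [abs_of_pos hc.1, abs_of_pos hε0]; ring
  have hn' : ‖y' - y‖ ≤ ε * ‖G y‖ := by
    rw [hn]
    have : 0 ≤ ε * ‖G y‖ := by positivity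
    nlinarith
  have hy'M : y' ∈ Metric.closedBall (0:ℂ) (M + 1) := by
    simp only [mem_closedBall_zero_iff]
    have h1 : ε * ‖G y‖ ≤ 1 := by
      have := mul_le_mul_of_nonneg_left hyA hε0.le
      linarith
    have := norm_add_le y (y' - y)
    rw [add_sub_cancel] at this
    linarith
  have hlip : ‖G y' - G y‖ ≤ L * ‖y' - y‖ := by
    have := hL.dist_le_mul y' hy'M y (by simp; linarith)
    simpa [dist_eq_norm] using this
  have hlip2 : ‖G y' - G y‖ ≤ 1 / 2 * ‖G y‖ := by
    have h2 := mul_le_mul_of_nonneg_left hn' hL0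
    have h3 := mul_le_mul_of_nonneg_right hεL (norm_nonneg (G y))
    nlinarith
  have hinner : (G y').re * (G y).re + (G y').im * (G y).im ≥ 1 / 2 * ‖G y‖ ^ 2 := by
    have h1 : (G y').re * (G y).re + (G y').im * (G y).im =
        ‖G y‖ ^ 2 + ((G y' - G y) * (starRingEnd ℂ) (G y)).re := by
      rw [← Complex.normSq_eq_norm_sq, Complex.normSq_apply]
      simp; ring
    have h2 := Complex.abs_re_le_norm ((G y' - G y) * (starRingEnd ℂ) (G y))
    rw [norm_mul, Complex.norm_conj] at h2
    have h3 := (abs_le.1 h2).1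
    have h4 := mul_le_mul_of_nonneg_right hlip2 (norm_nonneg (G y))
    nlinarith
  have hce2 : ((G y').re * (-(ε:ℂ) * G y).re + (G y').im * (-(ε:ℂ) * G y).im) =
      -ε * ((G y').re * (G y).re + (G y').im * (G y).im) := by
    simp; ring
  rw [hce2] at hce
  have := mul_le_mul_of_nonneg_left hinner (mul_pos h0 hε0).le
  nlinarith

/-- The core statement: the gradient of a coercive function has winding number one. -/
lemma core {F : ℂ → ℝ} {G : ℂ → ℂ} (hG : ContDiff ℝ 1 G) (hFc : Continuous F)
    (hgrad : ∀ (z w : ℂ) (s : ℝ), HasDerivAt (fun s : ℝ => F (z + s * w))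
      ((G (z + s * w)).re * w.re + (G (z + s * w)).im * w.im) s)
    (hF : Tendsto F (cocompact ℂ) atTop) {R : ℝ}
    (hne : ∀ z, R ≤ ‖z‖ → G z ≠ 0) :
    windC (fun t => G (R * circ t)) = 2 * Real.pi * Complex.I := by
  obtain ⟨C0, hC0⟩ := (isCompact_closedBall (0:ℂ) R).exists_bound_of_continuousOn hFc.continuousOn
  set C1 := C0 + 1 with hC1
  obtain ⟨ρ0, hρ00, hρ0⟩ := sublevel_bdd hF C1
  set ρ := max ρ0 R with hρ
  have hρpos : 0 < ρ := hρ00.trans_le (le_max_left _ _)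
  obtain ⟨C, hC⟩ := (isCompact_closedBall (0:ℂ) ρ).exists_bound_of_continuousOn hFc.continuousOn
  obtain ⟨ε, hε, hdesc⟩ := descent hG hgrad hF C
  rw [windC_radius hG hne (le_max_right ρ0 R), ← hρ]
  -- lower bound for the gradient
  obtain ⟨δ, hδ, hGδ⟩ : ∃ δ : ℝ, 0 < δ ∧ ∀ z, C1 ≤ F z → F z ≤ C → δ ≤ ‖G z‖ := by
    obtain ⟨M, hM0, hM⟩ := sublevel_bdd hF C
    have hK : IsCompact ({z : ℂ | C1 ≤ F z ∧ F z ≤ C}) := by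
      apply (isCompact_closedBall (0:ℂ) M).of_isClosed_subset
      · exact (isClosed_le continuous_const hFc).inter (isClosed_le hFc continuous_const)
      · intro z hz
        simpa using (hM z hz.2).le
    rcases Set.eq_empty_or_nonempty {z : ℂ | C1 ≤ F z ∧ F z ≤ C} with he | hne'
    · refine ⟨1, one_pos, fun z h1 h2 => ?_⟩
      have : z ∈ {z : ℂ | C1 ≤ F z ∧ F z ≤ C} := ⟨h1, h2⟩
      rw [he] at this
      exact this.elim
    · obtain ⟨z0, hz0, hmin⟩ := hK.exists_isMinOn hne' hG.continuous.norm.continuousOn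
      refine ⟨‖G z0‖, ?_, fun z h1 h2 => hmin (a := z) ⟨h1, h2⟩⟩
      rw [norm_pos_iff]
      apply hne
      by_contra hlt
      push Not at hlt
      have h1 := hC0 z0 (by simpa using hlt.le)
      have h2 := (le_abs_self (F z0)).trans h1
      have h3 := hz0.1
      linarith
  set T : ℂ → ℂ := fun y => y - (ε:ℂ) * G y with hT
  have hTs : ContDiff ℝ 1 T := by fun_prop
  have hTn : ∀ n : ℕ, ContDiff ℝ 1 (T^[n]) := by
    intro n
    induction n with
    | zero => exact contDiff_id
    | succ n ih => rw [Function.iterate_succ]; exact ih.comp hTs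
  have hTdesc : ∀ y, F y ≤ C → F (T y) ≤ F y - ε / 2 * ‖G y‖ ^ 2 := by
    intro y hy
    simpa using hdesc y hy 1 (by simp)
  have hx : ∀ t, F (ρ * circ t) ≤ C ∧ G (ρ * circ t) ≠ 0 ∧ ‖(ρ:ℂ) * circ t‖ = ρ := by
    intro t
    have hn : ‖(ρ:ℂ) * circ t‖ = ρ := by
      rw [norm_mul, circ_norm, Complex.norm_real, mul_one, Real.norm_eq_abs, abs_of_pos hρpos]
    refine ⟨(le_abs_self _).trans (hC _ (by rw [mem_closedBall_zero_iff, hn])), hne _ ?_, hn⟩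
    rw [hn]; exact le_max_right _ _
  -- monotonicity along iterates
  have hit : ∀ n t, F (T^[n] (ρ * circ t)) ≤ F (ρ * circ t) := by
    intro n t
    induction n with
    | zero => simp
    | succ n ih =>
      rw [Function.iterate_succ_apply']
      have := hTdesc _ (ih.trans (hx t).1)
      have h2 : 0 ≤ ε / 2 * ‖G (T^[n] (ρ * circ t))‖ ^ 2 := by positivity
      linarith
  have hit' : ∀ n t, F (T^[n+1] (ρ * circ t)) < F (ρ * circ t) := by
    intro n t
    induction n with
    | zero =>
      simp only [zero_add, Function.iterate_one]
      have := hTdesc _ (hx t).1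
      have h3 : 0 < ‖G (ρ * circ t)‖ := norm_pos_iff.2 (hx t).2.1
      have h2 : 0 < ε / 2 * ‖G (ρ * circ t)‖ ^ 2 := by positivity
      linarith
    | succ n ih =>
      rw [Function.iterate_succ_apply']
      have := hTdesc _ (ih.le.trans (hx t).1)
      have h2 : 0 ≤ ε / 2 * ‖G (T^[n+1] (ρ * circ t))‖ ^ 2 := by positivity
      linarith
  have hc := circ_contDiff
  have hγ : ∀ n, ContDiff ℝ 1 (fun t => (ρ:ℂ) * circ t - T^[n] (ρ * circ t)) := by
    intro n
    have := hTn n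
    fun_prop
  have hstep : ∀ n, windC (fun t => (ρ:ℂ) * circ t - T^[n+1] (ρ * circ t)) =
      windC (fun t => (ρ:ℂ) * circ t - T^[1] (ρ * circ t)) := by
    intro n
    induction n with
    | zero => rfl
    | succ n ih =>
      rw [← ih]
      symm
      apply windC_eq (hγ _) (hγ _)
      · simp only [circ_per]
      · simp only [circ_per]
      · intro t _
        apply slit_of_segment
        intro s hs h0
        rw [Function.iterate_succ_apply' T (n+1)] at h0
        set y := T^[n+1] (ρ * circ t) with hy
        have h1 : (ρ:ℂ) * circ t = y - (s * ε : ℝ) * G y := by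
          rw [← sub_eq_zero, ← h0, hT]
          push_cast; ring
        have h2 := hdesc y ((hit (n+1) t).trans (hx t).1) s hs
        rw [← h1] at h2
        have h3 := hit' n t
        rw [← hy] at h3
        have hs0 := hs.1
        have h4 : 0 ≤ s * ε / 2 * ‖G y‖ ^ 2 := by positivity
        linarith
  have hfirst : windC (fun t => (ρ:ℂ) * circ t - T^[1] (ρ * circ t)) =
      windC (fun t => G (ρ * circ t)) := by
    rw [← windC_smul hε (fun t => G (ρ * circ t))]
    · congr 1
      ext t
      simp [hT]
    · have : ContDiff ℝ 1 (fun t => G (ρ * circ t)) := by fun_prop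
      exact this.differentiable one_ne_zero
  -- after many steps we are inside the disc
  have hdec : ∀ (n : ℕ) t, F (T^[n] (ρ * circ t)) ≤ max C1 (C - n * (ε / 2 * δ ^ 2)) := by
    intro n t
    induction n with
    | zero => simpa using Or.inr (hx t).1
    | succ n ih =>
      rw [Function.iterate_succ_apply']
      set y := T^[n] (ρ * circ t) with hy
      have hyC : F y ≤ C := (hit n t).trans (hx t).1
      have h1 := hTdesc y hyC
      rcases le_total (F y) C1 with h | h
      · apply le_max_of_le_left
        have : 0 ≤ ε / 2 * ‖G y‖ ^ 2 := by positivity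
        linarith
      · have h2 := hGδ y h hyC
        have h3 : ε / 2 * δ ^ 2 ≤ ε / 2 * ‖G y‖ ^ 2 := by gcongr
        rcases le_max_iff.1 ih with h4 | h4
        · apply le_max_of_le_left
          have : 0 ≤ ε / 2 * ‖G y‖ ^ 2 := by positivity
          linarith
        · apply le_max_of_le_right
          push_cast
          linarith
  obtain ⟨N, hN⟩ := exists_nat_gt ((C - C1) / (ε / 2 * δ ^ 2))
  have hpos : 0 < ε / 2 * δ ^ 2 := by positivity
  rw [div_lt_iff₀ hpos] at hN
  have hin : ∀ t, ‖T^[N+1] (ρ * circ t)‖ < ρ := by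
    intro t
    refine (hρ0 _ ?_).trans_le (le_max_left _ _)
    refine (hdec (N+1) t).trans (max_le le_rfl ?_)
    push_cast
    linarith
  rw [← hfirst, ← hstep N, ← windC_circ hρpos]
  symm
  apply windC_eq (by fun_prop) (hγ _)
  · simp only [circ_per]
  · simp only [circ_per]
  · intro t _
    apply slit_of_segment
    intro s hs h0
    have h1 : (ρ:ℂ) * circ t = s * T^[N+1] (ρ * circ t) := by
      rw [← sub_eq_zero, ← h0]; ring
    have h2 := congrArg norm h1
    rw [(hx t).2.2, norm_mul, Complex.norm_real, Real.norm_eq_abs, abs_of_nonneg hs.1] at h2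
    have h3 := hin t
    have h4 := mul_le_mul_of_nonneg_right hs.2 (norm_nonneg (T^[N+1] (ρ * circ t)))
    linarith

/-- The polynomial function on the complex plane. -/
noncomputable def polyC (f : MvPolynomial (Fin 2) ℝ) (z : ℂ) : ℝ := evalP f z.re z.im

lemma polyC_contDiff (f : MvPolynomial (Fin 2) ℝ) : ContDiff ℝ 1 (polyC f) := by
  have hre : ContDiff ℝ 1 Complex.re := Complex.reCLM.contDiff
  have him : ContDiff ℝ 1 Complex.im := Complex.imCLM.contDiff
  induction f using MvPolynomial.induction_on with
  | C a =>
    have : polyC (C a) = fun _ => a := by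
      ext z; simp [polyC, evalP]
    rw [this]; exact contDiff_const
  | add p q hp hq =>
    have : polyC (p + q) = fun z => polyC p z + polyC q z := by
      ext z; simp [polyC, evalP]
    rw [this]; exact hp.add hq
  | mul_X p n hp =>
    fin_cases n
    · have : polyC (p * X 0) = fun z => polyC p z * z.re := by
        ext z; simp [polyC, evalP]
      simp only [Fin.zero_eta]
      rw [this]; exact hp.mul hre
    · have : polyC (p * X 1) = fun z => polyC p z * z.im := by
        ext z; simp [polyC, evalP]
      simp only [Fin.mk_one]
      rw [this]; exact hp.mul him

lemma polyC_line (f : MvPolynomial (Fin 2) ℝ) (z w : ℂ) (s : ℝ) :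
    HasDerivAt (fun s : ℝ => polyC f (z + s * w))
      (polyC (pderiv 0 f) (z + s * w) * w.re + polyC (pderiv 1 f) (z + s * w) * w.im) s := by
  have hre : HasDerivAt (fun s : ℝ => (z + s * w).re) w.re s := by
    have : (fun s : ℝ => (z + s * w).re) = fun s : ℝ => z.re + s * w.re := by ext s; simp
    rw [this]
    simpa using ((hasDerivAt_id s).mul_const w.re).const_add z.re
  have him : HasDerivAt (fun s : ℝ => (z + s * w).im) w.im s := by
    have : (fun s : ℝ => (z + s * w).im) = fun s : ℝ => z.im + s * w.im := by ext s; simp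
    rw [this]
    simpa using ((hasDerivAt_id s).mul_const w.im).const_add z.im
  induction f using MvPolynomial.induction_on with
  | C a => simpa [polyC, evalP] using hasDerivAt_const s a
  | add p q hp hq =>
    have h := hp.add hq
    convert! h using 1
    · ext s; simp [polyC, evalP]
    · simp only [polyC, evalP, map_add]; ring
  | mul_X p n hp =>
    fin_cases n
    · have h := hp.mul hre
      convert! h using 1
      · ext s; simp [polyC, evalP]
      · simp [polyC, evalP, Derivation.leibniz, pderiv_X]; ring
    · have h := hp.mul him
      convert! h using 1
      · ext s; simp [polyC, evalP]
      · simp [polyC, evalP, Derivation.leibniz, pderiv_X]; ring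

/-- A bounded polynomial is constant. -/
lemma const_of_bdd (f : MvPolynomial (Fin 2) ℝ) (B : ℝ) (hB : ∀ z, |polyC f z| ≤ B) :
    f.totalDegree = 0 := by
  have hz : ∀ x : Fin 2 → ℝ, MvPolynomial.eval x f = MvPolynomial.eval 0 f := by
    intro x
    set P : Polynomial ℝ := MvPolynomial.aeval (fun i => Polynomial.C (x i) * Polynomial.X) f with hP
    have hev : ∀ s : ℝ, P.eval s = MvPolynomial.eval (fun i => x i * s) f := by
      intro s
      rw [hP, ← Polynomial.coe_evalRingHom, MvPolynomial.aeval_def, MvPolynomial.eval₂_eq',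
        MvPolynomial.eval_eq']
      simp
    have hbd : ∀ s, |P.eval s| ≤ B := by
      intro s
      have h1 := hB ⟨x 0 * s, x 1 * s⟩
      rw [hev]
      have e : (fun i => x i * s) = ![x 0 * s, x 1 * s] := by
        ext i; fin_cases i <;> simp
      rw [e]; exact h1
    have hd : P.degree ≤ 0 := by
      rw [← Polynomial.isBoundedUnder_abs_atTop_iff]
      exact ⟨B, by simpa using ⟨0, fun s _ => hbd s⟩⟩
    rw [Polynomial.eq_C_of_degree_le_zero hd] at hev
    have h1 := hev 1
    have h0 := hev 0
    simp only [Polynomial.eval_C, mul_one, mul_zero] at h1 h0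
    rw [← h1, h0]; rfl
  have : f = C (MvPolynomial.eval 0 f) := by
    apply MvPolynomial.funext
    intro x
    rw [hz x]; simp
  rw [this, totalDegree_C]

lemma ext_preconnected (M : ℝ) (hM : 0 ≤ M) : IsPreconnected {z : ℂ | M < ‖z‖} := by
  have h : {z : ℂ | M < ‖z‖} =
      (fun p : ℝ × ℝ => (p.1 : ℂ) * circ p.2) '' (Set.Ioi M ×ˢ Set.univ) := by
    ext z
    constructor
    · intro hz
      exact ⟨(‖z‖, z.arg), ⟨hz, trivial⟩, Complex.norm_mul_exp_arg_mul_I z⟩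
    · rintro ⟨⟨r, t⟩, ⟨hr, -⟩, rfl⟩
      have hr' : M < r := hr
      simp only [Set.mem_ofPred_eq, norm_mul, circ_norm, Complex.norm_real, mul_one,
        Real.norm_eq_abs]
      exact hr'.trans_le (le_abs_self r)
  rw [h]
  apply IsPreconnected.image
  · exact isPreconnected_Ioi.prod isPreconnected_univ
  · have := circ_contDiff.continuous
    fun_prop

lemma polyC_proper (f : MvPolynomial (Fin 2) ℝ) (hnc : 0 < f.totalDegree)
    (hcpt : ∀ t : ℝ, IsCompact {p : ℝ × ℝ | evalP f p.1 p.2 = t}) :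
    Tendsto (polyC f) (cocompact ℂ) atTop ∨ Tendsto (polyC f) (cocompact ℂ) atBot := by
  have hc : Continuous (polyC f) := (polyC_contDiff f).continuous
  have hcof : ∀ M : ℝ, ∀ᶠ z : ℂ in cocompact ℂ, M < ‖z‖ := by
    intro M
    exact tendsto_norm_cocompact_atTop.eventually (eventually_gt_atTop M)
  have hdich : ∀ t : ℝ, (∀ᶠ z in cocompact ℂ, t < polyC f z) ∨
      (∀ᶠ z in cocompact ℂ, polyC f z < t) := by
    intro t
    obtain ⟨M, hM⟩ := (hcpt t).isBounded.exists_norm_le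
    have hne : ∀ z : ℂ, max (2 * M) 0 < ‖z‖ → polyC f z ≠ t := by
      intro z hz he
      have h1 := hM (z.re, z.im) he
      have h2 := Complex.norm_le_abs_re_add_abs_im z
      have h3 : |z.re| ≤ M := (norm_fst_le (z.re, z.im)).trans h1
      have h4 : |z.im| ≤ M := (norm_snd_le (z.re, z.im)).trans h1
      have := (le_max_left (2 * M) 0).trans_lt hz
      linarith
    have hpre := ext_preconnected (max (2 * M) 0) (le_max_right _ _)
    by_contra hcon
    push Not at hcon
    obtain ⟨ha, hb⟩ := hcon
    obtain ⟨z1, h1, h1'⟩ := (ha.and_eventually (hcof (max (2 * M) 0))).exists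
    obtain ⟨z2, h2, h2'⟩ := (hb.and_eventually (hcof (max (2 * M) 0))).exists
    obtain ⟨z, hz, hzt⟩ := hpre.intermediate_value h1' h2' hc.continuousOn ⟨h1, h2⟩
    exact hne z hz hzt
  by_cases hA : ∀ t, ∀ᶠ z in cocompact ℂ, t < polyC f z
  · left
    rw [tendsto_atTop]
    exact fun t => (hA t).mono fun _ h => h.le
  by_cases hB : ∀ t, ∀ᶠ z in cocompact ℂ, polyC f z < t
  · right
    rw [tendsto_atBot]
    exact fun t => (hB t).mono fun _ h => h.le
  exfalso
  rw [not_forall] at hA hB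
  obtain ⟨t1, ht1⟩ := hA
  obtain ⟨t2, ht2⟩ := hB
  have h1 := (hdich t1).resolve_left ht1
  have h2 := (hdich t2).resolve_right ht2
  obtain ⟨K, hK, hKs⟩ := mem_cocompact.1 (h1.and h2)
  obtain ⟨B, hB⟩ := hK.exists_bound_of_continuousOn hc.continuousOn
  have := const_of_bdd f (max B (max |t1| |t2|)) (by
    intro z
    by_cases hz : z ∈ K
    · exact (hB z hz).trans (le_max_left _ _)
    · have h := hKs hz
      refine le_trans ?_ (le_max_right _ _)
      have h3 : polyC f z < t1 := h.1
      have h4 : t2 < polyC f z := h.2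
      exact abs_le_max_abs_abs h4.le h3.le |>.trans (by rw [max_comm]))
  omega

/-- The gradient as a complex vector field. -/
noncomputable def gradC (f : MvPolynomial (Fin 2) ℝ) (z : ℂ) : ℂ :=
  (polyC (pderiv 0 f) z : ℂ) + (polyC (pderiv 1 f) z : ℂ) * Complex.I

lemma gradC_re (f : MvPolynomial (Fin 2) ℝ) (z : ℂ) : (gradC f z).re = polyC (pderiv 0 f) z := by
  simp [gradC]

lemma gradC_im (f : MvPolynomial (Fin 2) ℝ) (z : ℂ) : (gradC f z).im = polyC (pderiv 1 f) z := by
  simp [gradC]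

lemma gradC_contDiff (f : MvPolynomial (Fin 2) ℝ) : ContDiff ℝ 1 (gradC f) := by
  have h0 : ContDiff ℝ 1 (fun z => (polyC (pderiv 0 f) z : ℂ)) :=
    Complex.ofRealCLM.contDiff.comp (polyC_contDiff _)
  have h1 : ContDiff ℝ 1 (fun z => (polyC (pderiv 1 f) z : ℂ)) :=
    Complex.ofRealCLM.contDiff.comp (polyC_contDiff _)
  exact h0.add (h1.mul contDiff_const)

lemma gradIndex_eq (f : MvPolynomial (Fin 2) ℝ) (R : ℝ)
    (hne : ∀ t, gradC f (R * circ t) ≠ 0) :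
    gradIndex f R = 1 / (2 * Real.pi) * (windC (fun t => gradC f (R * circ t))).im := by
  have hc := circ_contDiff
  have hg := gradC_contDiff f
  set γ : ℝ → ℂ := fun t => gradC f (R * circ t) with hγ
  have hγd : ContDiff ℝ 1 γ := by fun_prop
  have hu : ∀ t, uFun f R t = (γ t).re := by
    intro t
    simp [hγ, gradC_re, uFun, polyC, circ, Complex.exp_ofReal_mul_I_re, Complex.exp_ofReal_mul_I_im]
  have hv : ∀ t, vFun f R t = (γ t).im := by
    intro t
    simp [hγ, gradC_im, vFun, polyC, circ, Complex.exp_ofReal_mul_I_re, Complex.exp_ofReal_mul_I_im]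
  have hd : ∀ t, HasDerivAt γ (deriv γ t) t := fun t =>
    (hγd.differentiable one_ne_zero t).hasDerivAt
  have hdu : ∀ t, deriv (uFun f R) t = (deriv γ t).re := by
    intro t
    rw [show uFun f R = fun t => (γ t).re from funext hu]
    exact (Complex.reCLM.hasFDerivAt.comp_hasDerivAt t (hd t)).deriv
  have hdv : ∀ t, deriv (vFun f R) t = (deriv γ t).im := by
    intro t
    rw [show vFun f R = fun t => (γ t).im from funext hv]
    exact (Complex.imCLM.hasFDerivAt.comp_hasDerivAt t (hd t)).deriv
  have hInt : IntervalIntegrable (fun t => deriv γ t / γ t) MeasureTheory.volume 0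
      (2 * Real.pi) := by
    apply Continuous.intervalIntegrable
    exact (hγd.continuous_deriv le_rfl).div hγd.continuous hne
  unfold gradIndex windC
  congr 1
  have h := Complex.imCLM.intervalIntegral_comp_comm hInt
  simp only [Complex.imCLM_apply] at h
  rw [← h]
  congr 1
  ext t
  rw [hu, hv, hdu, hdv, Complex.div_im, Complex.normSq_apply]
  ring

lemma windC_neg (γ : ℝ → ℂ) : windC (fun t => -γ t) = windC γ := by
  unfold windC
  congr 1
  ext t
  rw [deriv.fun_neg, neg_div_neg_eq]

theorem index_eq_one_of_compact_level_sets
    (f : MvPolynomial (Fin 2) ℝ) (hnc : 0 < f.totalDegree)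
    (hfin : {p : ℝ × ℝ | IsCriticalPt f p}.Finite)
    (hcpt : ∀ t : ℝ, IsCompact {p : ℝ × ℝ | evalP f p.1 p.2 = t})
    (R : ℝ) (hR : 0 < R)
    (hadm : ∀ p : ℝ × ℝ, IsCriticalPt f p → p.1 ^ 2 + p.2 ^ 2 < R ^ 2)
    (i : ℤ) (hi : (i : ℝ) = gradIndex f R) :
    i = 1 := by
  have hne : ∀ z, R ≤ ‖z‖ → gradC f z ≠ 0 := by
    intro z hz h0
    have h1 := hadm (z.re, z.im) ⟨by
      have := congrArg Complex.re h0
      rwa [gradC_re] at this, by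
      have := congrArg Complex.im h0
      rwa [gradC_im] at this⟩
    have h2 : ‖z‖ ^ 2 = z.re ^ 2 + z.im ^ 2 := by
      rw [← Complex.normSq_eq_norm_sq, Complex.normSq_apply]; ring
    have h3 : R ^ 2 ≤ ‖z‖ ^ 2 := by gcongr
    simp only at h1
    linarith
  have hcirc : ∀ t, gradC f (R * circ t) ≠ 0 := by
    intro t
    apply hne
    rw [norm_mul, circ_norm, Complex.norm_real, mul_one, Real.norm_eq_abs]
    exact le_abs_self R
  have hw : windC (fun t => gradC f (R * circ t)) = 2 * Real.pi * Complex.I := by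
    rcases polyC_proper f hnc hcpt with hF | hF
    · apply core (gradC_contDiff f) (polyC_contDiff f).continuous _ hF hne
      intro z w s
      rw [gradC_re, gradC_im]
      exact polyC_line f z w s
    · rw [← windC_neg]
      apply core (F := fun z => -polyC f z) (G := fun z => -gradC f z) (gradC_contDiff f).neg
        (polyC_contDiff f).continuous.neg _ (tendsto_neg_atBot_atTop.comp hF)
        (fun z hz => neg_ne_zero.2 (hne z hz))
      intro z w s
      rw [Complex.neg_re, Complex.neg_im, gradC_re, gradC_im]
      convert! (polyC_line f z w s).neg using 1
      ring
  rw [gradIndex_eq f R hcirc, hw] at hi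
  have hpi := Real.pi_ne_zero
  have : (i:ℝ) = 1 := by
    rw [hi]
    simp
    field_simp
  exact_mod_cast this
end

section
/- Let f : ℝ² → ℝ be a nonconstant real polynomial function of degree d in two variables with only finitely many critical points, and suppose that at least one level set {(x,y) : f(x,y) = t} is not compact. Then for every admissible radius R the index i of grad f around the circle of radius R satisfies |i| ≤ d_R − 1, where d_R is the real degree of f. -/
open MvPolynomial Filter

/-- The multiplicity of the real linear form `b·x − a·y` in `F`: the largest `m`
such that `(b·x − a·y)^m` divides `F` in `ℝ[x,y]`. -/
noncomputable def linMult (F : MvPolynomial (Fin 2) ℝ) (a b : ℝ) : ℕ :=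
  sSup {m : ℕ | (C b * X 0 - C a * X 1) ^ m ∣ F}

/-- The "real degree" of a homogeneous polynomial `F`: the sum, over the points
`[a : b]` of the real projective line (represented by `[a : 1]` for `a ∈ ℝ`,
together with `[1 : 0]`), of the multiplicity of the real linear factor
`b·x − a·y` in `F`; i.e. the sum of the multiplicities of the real linear
factors of `F`. -/
noncomputable def realDegreeOf (F : MvPolynomial (Fin 2) ℝ) : ℕ :=
  (∑ᶠ a : ℝ, linMult F a 1) + linMult F 1 0



theorem angle_lift (u v u' v' : ℝ → ℝ) (hu : ∀ t, HasDerivAt u (u' t) t)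
    (hv : ∀ t, HasDerivAt v (v' t) t) (hu' : Continuous u') (hv' : Continuous v')
    (hD : ∀ t, u t ^ 2 + v t ^ 2 ≠ 0) :
    ∃ φ : ℝ → ℝ, Continuous φ ∧
      (∀ a b, φ b - φ a = ∫ t in a..b, (u t * v' t - v t * u' t) / (u t ^ 2 + v t ^ 2)) ∧
      ∀ t, ∃ ρ > 0, u t = ρ * Real.cos (φ t) ∧ v t = ρ * Real.sin (φ t) := by
  have cu : Continuous u := continuous_iff_continuousAt.2 fun t => (hu t).continuousAt
  have cv : Continuous v := continuous_iff_continuousAt.2 fun t => (hv t).continuousAt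
  set ω : ℝ → ℝ := fun t => (u t * v' t - v t * u' t) / (u t ^ 2 + v t ^ 2) with hω
  have cω : Continuous ω := by
    apply Continuous.div _ _ hD <;> fun_prop
  obtain ⟨φ0, ρ0, hρ0, hu0, hv0⟩ : ∃ φ0 ρ0 : ℝ, 0 < ρ0 ∧ u 0 = ρ0 * Real.cos φ0 ∧
      v 0 = ρ0 * Real.sin φ0 := by
    set z : ℂ := ⟨u 0, v 0⟩ with hz
    have hz0 : z ≠ 0 := by
      intro h
      have h1 : u 0 = 0 := congrArg Complex.re h
      have h2 : v 0 = 0 := congrArg Complex.im h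
      exact hD 0 (by simp [h1, h2])
    refine ⟨z.arg, ‖z‖, norm_pos_iff.2 hz0, ?_, ?_⟩
    · rw [Complex.norm_mul_cos_arg]
    · rw [Complex.norm_mul_sin_arg]
  set φ : ℝ → ℝ := fun t => φ0 + ∫ s in (0:ℝ)..t, ω s with hφ
  have dφ : ∀ t, HasDerivAt φ (ω t) t := fun t =>
    (cω.integral_hasStrictDerivAt 0 t).hasDerivAt.const_add φ0
  have cφ : Continuous φ := continuous_iff_continuousAt.2 fun t => (dφ t).continuousAt
  set A : ℝ → ℝ := fun t => u t * Real.cos (φ t) + v t * Real.sin (φ t) with hA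
  set B : ℝ → ℝ := fun t => v t * Real.cos (φ t) - u t * Real.sin (φ t) with hB
  have dB : ∀ t, HasDerivAt (fun t => B t ^ 2 / (u t ^ 2 + v t ^ 2)) 0 t := by
    intro t
    have h1 : HasDerivAt B _ t := ((hv t).mul (dφ t).cos).sub ((hu t).mul (dφ t).sin)
    have h2 := (h1.pow 2).div (((hu t).pow 2).add ((hv t).pow 2)) (hD t)
    refine HasDerivAt.congr_deriv h2 ?_
    have h3 := hD t
    simp only [Pi.add_apply, Pi.pow_apply]
    rw [div_eq_zero_iff]
    left
    have h4 : ω t * (u t ^ 2 + v t ^ 2) = u t * v' t - v t * u' t := by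
      simp only [hω]; field_simp
    simp only [hB]
    push_cast
    linear_combination (-2 * (v t * Real.cos (φ t) - u t * Real.sin (φ t)) *
      (v t * Real.sin (φ t) + u t * Real.cos (φ t))) * h4
  have hB0 : ∀ t, B t = 0 := by
    intro t
    have h := is_const_of_deriv_eq_zero (f := fun t => B t ^ 2 / (u t ^ 2 + v t ^ 2))
      (fun t => (dB t).differentiableAt) (fun t => (dB t).deriv) t 0
    have h0 : B 0 = 0 := by
      simp only [hB, hφ, intervalIntegral.integral_same, add_zero, hu0, hv0]; ring
    simp only [h0] at h
    simpa [hD t] using h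
  have hAB : ∀ t, A t ^ 2 + B t ^ 2 = u t ^ 2 + v t ^ 2 := by
    intro t
    simp only [hA, hB]
    linear_combination (u t ^ 2 + v t ^ 2) * Real.sin_sq_add_cos_sq (φ t)
  have hA0 : ∀ t, A t ≠ 0 := by
    intro t h
    apply hD t
    rw [← hAB, h, hB0]; ring
  have cA : Continuous A := by fun_prop
  have hApos : ∀ t, 0 < A t := by
    intro t
    by_contra hneg
    have h00 : 0 ≤ A 0 := by
      simp only [hA, hφ, intervalIntegral.integral_same, add_zero, hu0, hv0]
      have := Real.sin_sq_add_cos_sq φ0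
      nlinarith
    obtain ⟨x, hx⟩ := mem_range_of_exists_le_of_exists_ge cA ⟨t, not_lt.1 hneg⟩ ⟨0, h00⟩
    exact hA0 x hx
  refine ⟨φ, cφ, ?_, ?_⟩
  · intro a b
    simp only [hφ]
    rw [← intervalIntegral.integral_interval_sub_left (cω.intervalIntegrable 0 b)
      (cω.intervalIntegrable 0 a)]
    ring
  · intro t
    refine ⟨A t, hApos t, ?_, ?_⟩
    · have := hB0 t
      simp only [hA, hB] at *
      linear_combination (-u t) * Real.sin_sq_add_cos_sq (φ t) - Real.sin (φ t) * this
    · have := hB0 t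
      simp only [hA, hB] at *
      linear_combination (-v t) * Real.sin_sq_add_cos_sq (φ t) + Real.cos (φ t) * this

/-- Leading term domination. -/
theorem lead_dom (c : ℕ → ℝ → ℝ) (d : ℕ) (K : Set ℝ) (hK : IsCompact K)
    (hc : ∀ k, Continuous (c k)) (h0 : ∀ t ∈ K, c d t ≠ 0) :
    ∀ᶠ R : ℝ in atTop, ∀ t ∈ K, 0 < c d t * ∑ k ∈ Finset.range (d + 1), R ^ k * c k t := by
  have hb : ∀ k, ∃ B : ℝ, 0 ≤ B ∧ ∀ t ∈ K, |c d t * c k t| ≤ B := by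
    intro k
    obtain ⟨B, hB⟩ := hK.exists_bound_of_continuousOn
      (f := fun t => c d t * c k t) ((hc d).mul (hc k)).continuousOn
    exact ⟨max B 0, le_max_right _ _, fun t ht => (hB t ht).trans (le_max_left _ _)⟩
  choose B hB0 hB using hb
  obtain ⟨ε, hε, hε'⟩ : ∃ ε > 0, ∀ t ∈ K, ε ≤ c d t * c d t := by
    rcases K.eq_empty_or_nonempty with h | h
    · exact ⟨1, one_pos, by simp [h]⟩
    · obtain ⟨x, hx, hm⟩ := hK.exists_isMinOn h
        (f := fun t => c d t * c d t) ((hc d).mul (hc d)).continuousOn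
      exact ⟨_, mul_self_pos.2 (h0 x hx), fun t ht => hm ht⟩
  set S := ∑ k ∈ Finset.range d, B k with hS
  filter_upwards [eventually_ge_atTop 1, eventually_gt_atTop (S / ε)] with R h1 h2 t ht
  have h3 : S < R * ε := (div_lt_iff₀ hε).1 h2
  rw [Finset.sum_range_succ, mul_add, Finset.mul_sum]
  rcases Nat.eq_zero_or_pos d with hd | hd
  · subst hd
    have := hε' t ht
    simp only [Finset.range_zero, Finset.sum_empty, pow_zero, one_mul, zero_add]; linarith
  have h4 : ∀ k ∈ Finset.range d, -(R ^ (d - 1) * B k) ≤ c d t * (R ^ k * c k t) := by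
    intro k hk
    have hk' : k ≤ d - 1 := by have := Finset.mem_range.1 hk; omega
    have h5 := (abs_le.1 (hB k t ht)).1
    have h6 : R ^ k ≤ R ^ (d - 1) := pow_le_pow_right₀ h1 hk'
    have h7 : 0 ≤ R ^ k := by positivity
    calc -(R ^ (d - 1) * B k) ≤ -(R ^ k * B k) := by
          have := mul_le_mul_of_nonneg_right h6 (hB0 k); linarith
      _ ≤ R ^ k * (c d t * c k t) := by nlinarith
      _ = _ := by ring
  have h8 := Finset.sum_le_sum h4
  rw [Finset.sum_neg_distrib, ← Finset.mul_sum] at h8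
  have h9 : R ^ d = R ^ (d - 1) * R := by rw [← pow_succ]; congr 1; omega
  have h10 : 0 < R ^ (d - 1) := by positivity
  have h11 : c d t * (R ^ d * c d t) ≥ R ^ (d - 1) * (R * ε) := by
    rw [h9]
    have : R * ε ≤ R * (c d t * c d t) := mul_le_mul_of_nonneg_left (hε' t ht) (by linarith)
    have := mul_le_mul_of_nonneg_left this h10.le
    linarith
  have h12 := mul_lt_mul_of_pos_left h3 h10
  linarith

/-- Rolle count. -/
theorem rolle_seq (n : ℕ) : ∀ (h : ℝ → ℝ), ContDiff ℝ (⊤ : ℕ∞) h → ∀ (a b : ℝ) (x : ℕ → ℝ),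
    (∀ j ≤ n, x j ∈ Set.Icc a b ∧ h (x j) = 0) → (∀ j < n, x j < x (j + 1)) →
    ∃ y ∈ Set.Icc a b, iteratedDeriv n h y = 0 := by
  induction n with
  | zero =>
    intro h _ a b x hx _
    exact ⟨x 0, (hx 0 le_rfl).1, by simpa using (hx 0 le_rfl).2⟩
  | succ n ih =>
    intro h hh a b x hx hlt
    have : ∀ j, ∃ y, j < n + 1 → y ∈ Set.Ioo (x j) (x (j + 1)) ∧ deriv h y = 0 := by
      intro j
      by_cases hj : j < n + 1
      · obtain ⟨y, hy, hy'⟩ := exists_deriv_eq_zero (hlt j hj) hh.continuous.continuousOn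
          (by rw [(hx j hj.le).2, (hx (j+1) hj).2])
        exact ⟨y, fun _ => ⟨hy, hy'⟩⟩
      · exact ⟨0, fun h => absurd h hj⟩
    choose y hy using this
    have hd : ContDiff ℝ (⊤ : ℕ∞) (deriv h) := ((contDiff_infty_iff_deriv).1 hh).2
    obtain ⟨w, hw, hw'⟩ := ih (deriv h) hd a b y
      (fun j hj => by
        have h1 := hy j (by omega)
        have h2 := (hx j (by omega)).1
        have h3 := (hx (j + 1) (by omega)).1
        exact ⟨⟨by linarith [h1.1.1, h2.1], by linarith [h1.1.2, h3.2]⟩, h1.2⟩)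
      (fun j hj => by
        have h1 := (hy j (by omega)).1.2
        have h2 := (hy (j+1) (by omega)).1.1
        linarith)
    exact ⟨w, hw, by rw [iteratedDeriv_succ']; exact hw'⟩

theorem rolle_card (n : ℕ) (h : ℝ → ℝ) (hh : ContDiff ℝ (⊤ : ℕ∞) h) (a b : ℝ)
    (hn : ∀ t ∈ Set.Icc a b, iteratedDeriv n h t ≠ 0) (S : Finset ℝ)
    (hS : ∀ x ∈ S, x ∈ Set.Icc a b ∧ h x = 0) : S.card ≤ n := by
  by_contra hc
  push Not at hc
  obtain ⟨T, hTS, hT⟩ := Finset.exists_subset_card_eq (s := S) (n := n + 1) hc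
  set e := T.orderEmbOfFin hT
  obtain ⟨y, hy, hy'⟩ := rolle_seq n h hh a b (fun j => if hj : j < n + 1 then e ⟨j, hj⟩ else 0)
    (fun j hj => by
      have : j < n + 1 := by omega
      simp only [this, dite_true]
      exact hS _ (hTS (T.orderEmbOfFin_mem hT _)))
    (fun j hj => by
      have h1 : j < n + 1 := by omega
      have h2 : j + 1 < n + 1 := by omega
      simp only [h1, h2, dite_true]
      exact e.strictMono (by simp [Fin.lt_def]))
  exact hn y hy hy'


noncomputable def radSum (G : ℕ → ℝ → ℝ) (d : ℕ) (R t : ℝ) : ℝ :=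
  ∑ k ∈ Finset.range (d + 1), R ^ k * (k * G k t)

noncomputable def angSum (G : ℕ → ℝ → ℝ) (d : ℕ) (R t : ℝ) : ℝ :=
  ∑ k ∈ Finset.range (d + 1), R ^ k * deriv (G k) t

def IsLift (G : ℕ → ℝ → ℝ) (d : ℕ) (R : ℝ) (ψ : ℝ → ℝ) : Prop :=
  Continuous ψ ∧ ∀ t, ∃ ρ > 0, radSum G d R t = ρ * Real.cos (ψ t) ∧
    angSum G d R t = ρ * Real.sin (ψ t)

def GoodInt (G : ℕ → ℝ → ℝ) (d : ℕ) (a b : ℝ) (M N : ℤ) : Prop :=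
  ∀ᶠ R : ℝ in atTop, ∀ ψ, IsLift G d R ψ → ∀ k l : ℤ,
    |ψ a - k * Real.pi| < Real.pi / 2 → |ψ b - l * Real.pi| < Real.pi / 2 →
      -M ≤ l - k ∧ l - k ≤ N

theorem exists_near_int (x : ℝ) (h : Real.cos x ≠ 0) :
    ∃ k : ℤ, |x - k * Real.pi| < Real.pi / 2 := by
  have hpi := Real.pi_pos
  refine ⟨round (x / Real.pi), ?_⟩
  have h1 := abs_sub_round (x / Real.pi)
  have h2 : x - round (x / Real.pi) * Real.pi = (x / Real.pi - round (x / Real.pi)) * Real.pi := by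
    field_simp
  have h3 : |x - round (x / Real.pi) * Real.pi| ≤ Real.pi / 2 := by
    rw [h2, abs_mul, abs_of_pos hpi]
    nlinarith
  refine lt_of_le_of_ne h3 fun h4 => h ?_
  set k := round (x / Real.pi)
  have h5 : Real.cos (x - k * Real.pi) = 0 := by
    rw [← Real.cos_abs, h4, Real.cos_pi_div_two]
  rw [Real.cos_sub_int_mul_pi] at h5
  rcases mul_eq_zero.1 h5 with h6 | h6
  · exact absurd h6 (zpow_ne_zero _ (by norm_num))
  · exact h6

theorem sin_mul_cos_shift (x : ℝ) (k : ℤ) :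
    Real.sin (x - k * Real.pi) * Real.cos (x - k * Real.pi) = Real.sin x * Real.cos x := by
  rw [Real.sin_sub_int_mul_pi, Real.cos_sub_int_mul_pi]
  have : ((-1 : ℝ) ^ k) * (-1) ^ k = 1 := by
    rw [← mul_zpow]; simp
  linear_combination (Real.sin x * Real.cos x) * this

theorem lt_of_sin_cos_neg (x : ℝ) (k : ℤ) (h : |x - k * Real.pi| < Real.pi / 2)
    (hs : Real.sin x * Real.cos x < 0) : x < k * Real.pi := by
  by_contra hc
  rw [← sin_mul_cos_shift x k] at hs
  have h1 := (abs_lt.1 h)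
  have h2 : 0 ≤ Real.sin (x - k * Real.pi) :=
    Real.sin_nonneg_of_nonneg_of_le_pi (by linarith) (by linarith [Real.pi_pos])
  have h3 : 0 ≤ Real.cos (x - k * Real.pi) :=
    Real.cos_nonneg_of_neg_pi_div_two_le_of_le (by linarith) (by linarith)
  nlinarith [mul_nonneg h2 h3]

theorem gt_of_sin_cos_pos (x : ℝ) (k : ℤ) (h : |x - k * Real.pi| < Real.pi / 2)
    (hs : 0 < Real.sin x * Real.cos x) : k * Real.pi < x := by
  have := lt_of_sin_cos_neg (-x) (-k) (by
    rw [← abs_neg]; push_cast; ring_nf; ring_nf at h; exact h) (by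
    rw [Real.sin_neg, Real.cos_neg]; linarith)
  push_cast at this
  linarith

theorem count_le (ψ : ℝ → ℝ) (hψ : Continuous ψ) (a b : ℝ) (hab : a ≤ b) (n : ℕ)
    (hT : ∀ T : Finset ℝ, (∀ x ∈ T, x ∈ Set.Icc a b ∧ Real.sin (ψ x) = 0) → T.card ≤ n)
    (S : Finset ℤ) (hS : ∀ j ∈ S, (j : ℝ) * Real.pi ∈ Set.uIcc (ψ a) (ψ b)) : S.card ≤ n := by
  have : ∀ j : ℤ, ∃ t, j ∈ S → t ∈ Set.Icc a b ∧ ψ t = j * Real.pi := by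
    intro j
    by_cases hj : j ∈ S
    · obtain ⟨t, ht, ht'⟩ := intermediate_value_uIcc hψ.continuousOn (hS j hj)
      rw [Set.uIcc_of_le hab] at ht
      exact ⟨t, fun _ => ⟨ht, ht'⟩⟩
    · exact ⟨0, fun h => absurd h hj⟩
  choose t ht using this
  classical
  have hinj : Set.InjOn t S := by
    intro i hi j hj hij
    have h1 := (ht i hi).2
    rw [hij, (ht j hj).2] at h1
    exact_mod_cast (mul_right_cancel₀ Real.pi_ne_zero h1).symm
  rw [← Finset.card_image_of_injOn hinj]
  apply hT
  intro x hx
  obtain ⟨j, hj, rfl⟩ := Finset.mem_image.1 hx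
  exact ⟨(ht j hj).1, by rw [(ht j hj).2]; exact Real.sin_int_mul_pi j⟩

theorem rad_event (G : ℕ → ℝ → ℝ) (d : ℕ) (hd : 1 ≤ d)
    (hG : ∀ k, ContDiff ℝ (⊤ : ℕ∞) (G k))
    (K : Set ℝ) (hK : IsCompact K) (h0 : ∀ t ∈ K, G d t ≠ 0) :
    ∀ᶠ R : ℝ in atTop, ∀ t ∈ K, 0 < G d t * radSum G d R t := by
  have hd' : (0 : ℝ) < d := by exact_mod_cast hd
  have := lead_dom (fun k t => (k : ℝ) * G k t) d K hK
    (fun k => continuous_const.mul (hG k).continuous)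
    (fun t ht => mul_ne_zero hd'.ne' (h0 t ht))
  filter_upwards [this] with R hR t ht
  have h1 := hR t ht
  rw [mul_assoc] at h1
  exact (pos_iff_pos_of_mul_pos h1).1 hd'

theorem good_nozero (G : ℕ → ℝ → ℝ) (d : ℕ) (hd : 1 ≤ d)
    (hG : ∀ k, ContDiff ℝ (⊤ : ℕ∞) (G k))
    (a b : ℝ) (hab : a ≤ b) (h0 : ∀ t ∈ Set.Icc a b, G d t ≠ 0) :
    GoodInt G d a b 0 0 := by
  filter_upwards [rad_event G d hd hG _ isCompact_Icc h0] with R hR ψ hψ k l hk hl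
  have hc : ∀ t ∈ Set.Icc a b, Real.cos (ψ t) ≠ 0 := by
    intro t ht hc
    obtain ⟨ρ, -, h1, -⟩ := hψ.2 t
    have := hR t ht
    rw [h1, hc] at this
    simp at this
  have hpi := Real.pi_pos
  have key : ∀ j : ℤ, (j : ℝ) * Real.pi + Real.pi / 2 ∉ Set.uIcc (ψ a) (ψ b) := by
    intro j hj
    obtain ⟨t, ht, ht'⟩ := intermediate_value_uIcc hψ.1.continuousOn hj
    rw [Set.uIcc_of_le hab] at ht
    apply hc t ht
    rw [ht', Real.cos_add_pi_div_two, Real.sin_int_mul_pi, neg_zero]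
  have h1 := abs_lt.1 hk
  have h2 := abs_lt.1 hl
  have : l = k := by
    rcases lt_trichotomy l k with h | h | h
    · exfalso
      have h3 : (l : ℝ) + 1 ≤ k := by exact_mod_cast h
      apply key l
      rw [Set.mem_uIcc]
      right
      constructor <;> nlinarith
    · exact h
    · exfalso
      have h3 : (k : ℝ) + 1 ≤ l := by exact_mod_cast h
      apply key k
      rw [Set.mem_uIcc]
      left
      constructor <;> nlinarith
  omega

theorem good_trans (G : ℕ → ℝ → ℝ) (d : ℕ) (hd : 1 ≤ d)
    (hG : ∀ k, ContDiff ℝ (⊤ : ℕ∞) (G k))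
    (a b c : ℝ) (M N M' N' : ℤ) (hb : G d b ≠ 0)
    (h1 : GoodInt G d a b M N) (h2 : GoodInt G d b c M' N') :
    GoodInt G d a c (M + M') (N + N') := by
  filter_upwards [h1, h2, rad_event G d hd hG {b} isCompact_singleton (by simpa using hb)]
    with R h1 h2 h3 ψ hψ k l hk hl
  have hc : Real.cos (ψ b) ≠ 0 := by
    intro hc
    obtain ⟨ρ, -, h4, -⟩ := hψ.2 b
    have := h3 b rfl
    rw [h4, hc] at this
    simp at this
  obtain ⟨j, hj⟩ := exists_near_int _ hc
  have h4 := h1 ψ hψ k j hk hj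
  have h5 := h2 ψ hψ j l hj hl
  omega

theorem iter_ne (z : ℝ) (m : ℕ) : ∀ q : ℝ → ℝ, ContDiff ℝ (⊤ : ℕ∞) q → q z ≠ 0 →
    iteratedDeriv m (fun t => Real.sin (t - z) ^ m * q t) z ≠ 0 := by
  induction m with
  | zero => intro q _ h; simpa using h
  | succ m ih =>
    intro q hq h
    rw [iteratedDeriv_succ']
    have h1 : deriv (fun t => Real.sin (t - z) ^ (m + 1) * q t) = fun t =>
        Real.sin (t - z) ^ m * ((m + 1) * Real.cos (t - z) * q t + Real.sin (t - z) * deriv q t) := by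
      funext t
      have hs : HasDerivAt (fun t => Real.sin (t - z)) (Real.cos (t - z)) t := by
        simpa using (((hasDerivAt_id t).sub_const z).sin)
      have hq' : HasDerivAt q (deriv q t) t :=
        ((hq.differentiable (by simp)) t).hasDerivAt
      refine (HasDerivAt.congr_deriv ((hs.pow (m + 1)).mul hq') ?_).deriv
      simp
      ring
    rw [h1]
    have hd : ContDiff ℝ (⊤ : ℕ∞) (deriv q) := ((contDiff_infty_iff_deriv).1 hq).2
    apply ih
    · fun_prop
    · simp only [sub_self, Real.cos_zero, Real.sin_zero, zero_mul, add_zero, mul_one]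
      exact mul_ne_zero (by positivity) h

theorem good_local (G : ℕ → ℝ → ℝ) (d : ℕ) (hd : 1 ≤ d)
    (hG : ∀ k, ContDiff ℝ (⊤ : ℕ∞) (G k))
    (z : ℝ) (m : ℕ) (hm : 1 ≤ m) (q : ℝ → ℝ) (hq : ContDiff ℝ (⊤ : ℕ∞) q)
    (hqz : q z ≠ 0) (hg : ∀ t, G d t = Real.sin (t - z) ^ m * q t) :
    ∃ δ > 0, (∀ t, z - δ < t → t < z + δ → t ≠ z → G d t ≠ 0) ∧
      ∀ a b, z - δ < a → a < z → z < b → b < z + δ → GoodInt G d a b m (m - 2) := by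
  have hgf : G d = fun t => Real.sin (t - z) ^ m * q t := funext hg
  have hdq : ContDiff ℝ (⊤ : ℕ∞) (deriv q) := ((contDiff_infty_iff_deriv).1 hq).2
  have hdG : ∀ k, ContDiff ℝ (⊤ : ℕ∞) (deriv (G k)) := fun k => ((contDiff_infty_iff_deriv).1 (hG k)).2
  have hcq := hq.continuous
  have hcdq := hdq.continuous
  have hiter : ContinuousAt (iteratedDeriv m (G d)) z :=
    ((hG d).continuous_iteratedDeriv m (by exact_mod_cast le_top)).continuousAt
  have e1 : ∀ᶠ t in nhds z, iteratedDeriv m (G d) t ≠ 0 := by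
    apply hiter.eventually_ne
    rw [hgf]; exact iter_ne z m q hq hqz
  have e2 : ∀ᶠ t in nhds z, q t ≠ 0 := hcq.continuousAt.eventually_ne hqz
  have e3 : ∀ᶠ t in nhds z,
      0 < m * Real.cos (t - z) * q t ^ 2 + Real.sin (t - z) * q t * deriv q t := by
    have hc : ContinuousAt (fun t => m * Real.cos (t - z) * q t ^ 2 +
      Real.sin (t - z) * q t * deriv q t) z := by fun_prop
    apply hc.eventually (lt_mem_nhds _)
    have : (0 : ℝ) < m := by exact_mod_cast hm
    simp; positivity
  obtain ⟨δ, hδ, hball⟩ := Metric.eventually_nhds_iff.1 (e1.and (e2.and e3))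
  refine ⟨min δ 1, by positivity, ?_⟩
  have hb : ∀ t, z - min δ 1 < t → t < z + min δ 1 → dist t z < δ ∧ |t - z| < 1 := by
    intro t h1 h2
    rw [Real.dist_eq]
    have h3 := min_le_left δ 1
    have h4 := min_le_right δ 1
    constructor <;> rw [abs_lt] <;> constructor <;> linarith
  have hpi := Real.pi_gt_three
  have hsinpos : ∀ t, z < t → t < z + min δ 1 → 0 < Real.sin (t - z) := by
    intro t h1 h2
    have h4 := min_le_right δ 1
    exact Real.sin_pos_of_pos_of_lt_pi (by linarith) (by linarith)
  have hsinneg : ∀ t, t < z → z - min δ 1 < t → Real.sin (t - z) < 0 := by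
    intro t h1 h2
    have h4 := min_le_right δ 1
    exact Real.sin_neg_of_neg_of_neg_pi_lt (by linarith) (by linarith)
  have hne : ∀ t, z - min δ 1 < t → t < z + min δ 1 → t ≠ z → G d t ≠ 0 := by
    intro t h1 h2 h3
    rw [hg]
    refine mul_ne_zero (pow_ne_zero _ ?_) (hball (hb t h1 h2).1).2.1
    rcases lt_or_gt_of_ne h3 with h | h
    · exact (hsinneg t h h1).ne
    · exact (hsinpos t h h2).ne'
  refine ⟨hne, ?_⟩
  intro a b ha haz hzb hbδ
  have hab : a ≤ b := by linarith
  have hδ1 : (0:ℝ) < min δ 1 := by positivity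
  have hinn : ∀ t ∈ Set.Icc a b, dist t z < δ := fun t ht =>
    (hb t (by linarith [ht.1]) (by linarith [ht.2])).1
  -- derivative formula
  have hderiv : ∀ t, Real.sin (t - z) * (G d t * deriv (G d) t) = (Real.sin (t - z) ^ m) ^ 2 *
      (m * Real.cos (t - z) * q t ^ 2 + Real.sin (t - z) * q t * deriv q t) := by
    intro t
    have hs : HasDerivAt (fun t => Real.sin (t - z)) (Real.cos (t - z)) t := by
      simpa using (((hasDerivAt_id t).sub_const z).sin)
    have hq' : HasDerivAt q (deriv q t) t :=
      ((hq.differentiable (by simp)) t).hasDerivAt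
    have h1 := ((hs.pow m).mul hq').deriv
    have h0 : G d = ((fun t => Real.sin (t - z)) ^ m * q) := hgf
    rw [hg t, h0, h1]
    obtain ⟨n, rfl⟩ : ∃ n, m = n + 1 := ⟨m - 1, by omega⟩
    simp only [Nat.add_sub_cancel, Pi.pow_apply]
    push_cast
    ring
  have hprod : ∀ t, Real.sin (t - z) ≠ 0 → dist t z < δ →
      0 < Real.sin (t - z) * (G d t * deriv (G d) t) := by
    intro t h1 h2
    rw [hderiv]
    have := (hball h2).2.2
    have : 0 < (Real.sin (t - z) ^ m) ^ 2 := by positivity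
    positivity
  have hsa := hsinneg a haz ha
  have hsb := hsinpos b hzb hbδ
  have hpa : G d a * deriv (G d) a < 0 := by
    have := hprod a hsa.ne (hinn a ⟨le_rfl, hab⟩)
    exact neg_of_mul_pos_right this hsa.le
  have hpb : 0 < G d b * deriv (G d) b := by
    have := hprod b hsb.ne' (hinn b ⟨hab, le_rfl⟩)
    exact pos_of_mul_pos_right this hsb.le
  have hcd : ∀ k, Continuous (deriv (G k)) := fun k => (hdG k).continuous
  have E1 := rad_event G d hd hG {a, b} (Set.toFinite _).isCompact (by
    rintro t (rfl | rfl)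
    · intro h; rw [h] at hpa; simp at hpa
    · intro h; rw [h] at hpb; simp at hpb)
  have E2 := lead_dom (fun k => deriv (G k)) d {a, b} (Set.toFinite _).isCompact hcd (by
    rintro t (rfl | rfl)
    · intro h; simp only [h] at hpa; simp at hpa
    · intro h; simp only [h] at hpb; simp at hpb)
  have E3 := lead_dom (fun k => iteratedDeriv m (G k)) d (Set.Icc a b) isCompact_Icc
    (fun k => (hG k).continuous_iteratedDeriv m (by exact_mod_cast le_top))
    (fun t ht => (hball (hinn t ht)).1)
  filter_upwards [E1, E2, E3] with R E1 E2 E3 ψ hψ k l hk hl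
  have hang : ContDiff ℝ (⊤ : ℕ∞) (angSum G d R) := by
    unfold angSum
    apply ContDiff.sum
    intro k _
    exact contDiff_const.mul (hdG k)
  have hit : ∀ t, iteratedDeriv (m - 1) (angSum G d R) t =
      ∑ k ∈ Finset.range (d + 1), R ^ k * iteratedDeriv m (G k) t := by
    intro t
    unfold angSum
    rw [iteratedDeriv_fun_sum]
    · refine Finset.sum_congr rfl fun k _ => ?_
      rw [iteratedDeriv_const_mul_field, ← iteratedDeriv_succ']
      congr 2
      omega
    · intro k _
      exact (contDiff_infty.1 (contDiff_const.mul (hdG k)) _).contDiffAt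
  have hcount : ∀ T : Finset ℝ, (∀ x ∈ T, x ∈ Set.Icc a b ∧ Real.sin (ψ x) = 0) →
      T.card ≤ m - 1 := by
    intro T hT
    apply rolle_card (m - 1) (angSum G d R) hang a b _ T
    · intro x hx
      obtain ⟨ρ, -, -, h⟩ := hψ.2 x
      exact ⟨(hT x hx).1, by rw [h, (hT x hx).2, mul_zero]⟩
    · intro t ht h
      rw [hit] at h
      have := E3 t ht
      simp [h] at this
  have hcl := count_le ψ hψ.1 a b hab (m - 1) hcount
  have hsc : ∀ t, ∃ ρ > 0, radSum G d R t * angSum G d R t =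
      ρ * (Real.sin (ψ t) * Real.cos (ψ t)) := by
    intro t
    obtain ⟨ρ, h0, h1, h2⟩ := hψ.2 t
    exact ⟨ρ * ρ, by positivity, by rw [h1, h2]; ring⟩
  have hψa : ψ a < k * Real.pi := by
    apply lt_of_sin_cos_neg _ _ hk
    obtain ⟨ρ, h0, h1⟩ := hsc a
    have h2 := E1 a (by simp)
    have h3 : 0 < deriv (G d) a * angSum G d R a := E2 a (by simp)
    have h4 := mul_pos h2 h3
    have h5 : (G d a * deriv (G d) a) * (ρ * (Real.sin (ψ a) * Real.cos (ψ a))) > 0 := by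
      rw [← h1]; linarith
    have h6 := neg_of_mul_pos_right h5 hpa.le
    exact neg_of_mul_neg_right h6 h0.le
  have hψb : l * Real.pi < ψ b := by
    apply gt_of_sin_cos_pos _ _ hl
    obtain ⟨ρ, h0, h1⟩ := hsc b
    have h2 := E1 b (by simp)
    have h3 : 0 < deriv (G d) b * angSum G d R b := E2 b (by simp)
    have h4 := mul_pos h2 h3
    have h5 : (G d b * deriv (G d) b) * (ρ * (Real.sin (ψ b) * Real.cos (ψ b))) > 0 := by
      rw [← h1]; linarith
    have h6 := pos_of_mul_pos_right h5 hpb.le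
    exact pos_of_mul_pos_right h6 h0.le
  have h1 := abs_lt.1 hk
  have h2 := abs_lt.1 hl
  have hpi0 := Real.pi_pos
  rcases le_or_gt k l with hkl | hkl
  · have := hcl (Finset.Icc k l) (by
      intro j hj
      rw [Finset.mem_Icc] at hj
      have h3 : (k : ℝ) ≤ j := by exact_mod_cast hj.1
      have h4 : (j : ℝ) ≤ l := by exact_mod_cast hj.2
      rw [Set.mem_uIcc]
      left
      constructor <;> nlinarith)
    rw [Int.card_Icc] at this
    omega
  · have := hcl (Finset.Icc (l + 1) (k - 1)) (by
      intro j hj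
      rw [Finset.mem_Icc] at hj
      have h3 : (l : ℝ) + 1 ≤ j := by exact_mod_cast hj.1
      have h4 : (j : ℝ) + 1 ≤ k := by
        have : j + 1 ≤ k := by omega
        exact_mod_cast this
      rw [Set.mem_uIcc]
      right
      constructor <;> nlinarith)
    rw [Int.card_Icc] at this
    omega

theorem good_all (G : ℕ → ℝ → ℝ) (d : ℕ) (hd : 1 ≤ d)
    (hG : ∀ k, ContDiff ℝ (⊤ : ℕ∞) (G k))
    (mu : ℝ → ℕ)
    (hloc : ∀ z, G d z = 0 → 1 ≤ mu z ∧ ∃ q : ℝ → ℝ, ContDiff ℝ (⊤ : ℕ∞) q ∧ q z ≠ 0 ∧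
      ∀ t, G d t = Real.sin (t - z) ^ (mu z) * q t) (a : ℝ) (ha : G d a ≠ 0) (n : ℕ) :
    ∀ (b : ℝ) (_ : a ≤ b) (_ : G d b ≠ 0) (Z : Finset ℝ)
      (_ : ∀ t, t ∈ Z ↔ t ∈ Set.Icc a b ∧ G d t = 0) (_ : Z.card = n),
      GoodInt G d a b (∑ z ∈ Z, (mu z : ℤ)) (∑ z ∈ Z, ((mu z : ℤ) - 2)) := by
  classical
  induction n with
  | zero =>
    intro b hab hb Z hZ hc
    rw [Finset.card_eq_zero] at hc
    subst hc
    simpa using good_nozero G d hd hG a b hab (fun t ht h => by simpa using (hZ t).2 ⟨ht, h⟩)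
  | succ n ih =>
    intro b hab hb Z hZ hc
    have hne : Z.Nonempty := by rw [← Finset.card_pos]; omega
    set z := Z.max' hne with hz
    have hzZ : z ∈ Z := Z.max'_mem hne
    obtain ⟨⟨haz, hzb⟩, hGz⟩ := (hZ z).1 hzZ
    have haz' : a < z := lt_of_le_of_ne haz (fun h => ha (h ▸ hGz))
    have hzb' : z < b := lt_of_le_of_ne hzb (fun h => hb (h ▸ hGz))
    obtain ⟨hm, q, hq, hqz, hg⟩ := hloc z hGz
    obtain ⟨δ, hδ, hnz, hgood⟩ := good_local G d hd hG z (mu z) hm q hq hqz hg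
    obtain ⟨α, hα1, hα2⟩ := exists_between (max_lt haz' (show z - δ < z by linarith))
    obtain ⟨β, hβ1, hβ2⟩ := exists_between (lt_min hzb' (show z < z + δ by linarith))
    rw [max_lt_iff] at hα1
    rw [lt_min_iff] at hβ2
    have hGα := hnz α hα1.2 (by linarith) hα2.ne
    have hGβ := hnz β (by linarith) hβ2.2 hβ1.ne'
    have g1 := ih α hα1.1.le hGα (Z.erase z) (by
      intro t
      rw [Finset.mem_erase, hZ]
      constructor
      · rintro ⟨h1, h2, h3⟩
        refine ⟨⟨h2.1, ?_⟩, h3⟩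
        by_contra h4
        push Not at h4
        have h5 : t ≤ z := Z.le_max' t ((hZ t).2 ⟨h2, h3⟩)
        exact hnz t (by linarith) (by linarith) h1 h3
      · rintro ⟨h1, h2⟩
        exact ⟨by linarith [h1.2] |> fun (h : t < z) => h.ne, ⟨h1.1, by linarith [h1.2]⟩, h2⟩)
      (by rw [Finset.card_erase_of_mem hzZ, hc]; rfl)
    have g2 := hgood α β hα1.2 hα2 hβ1 hβ2.2
    have g3 := good_nozero G d hd hG β b hβ2.1.le (by
      intro t ht h
      have h5 : t ≤ z := Z.le_max' t ((hZ t).2 ⟨⟨by linarith [ht.1], ht.2⟩, h⟩)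
      linarith [ht.1])
    have g4 := good_trans G d hd hG a β b _ _ _ _ hGβ
      (good_trans G d hd hG a α β _ _ _ _ hGα g1 g2) g3
    rw [← Finset.sum_erase_add _ _ hzZ, ← Finset.sum_erase_add _ _ hzZ]
    simpa using g4


theorem evalP_hasDerivAt (P : MvPolynomial (Fin 2) ℝ) (x y : ℝ → ℝ) (x' y' s : ℝ)
    (hx : HasDerivAt x x' s) (hy : HasDerivAt y y' s) :
    HasDerivAt (fun s => evalP P (x s) (y s))
      (evalP (pderiv 0 P) (x s) (y s) * x' + evalP (pderiv 1 P) (x s) (y s) * y') s := by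
  induction P using MvPolynomial.induction_on with
  | C a => simpa [evalP] using hasDerivAt_const s a
  | add p q hp hq =>
    have := hp.add hq
    simp only [evalP, map_add] at *
    refine HasDerivAt.congr_deriv this ?_
    ring
  | mul_X p n hp =>
    have hX : HasDerivAt (fun s => evalP (X n) (x s) (y s))
      (evalP (pderiv 0 (X n)) (x s) (y s) * x' + evalP (pderiv 1 (X n)) (x s) (y s) * y') s := by
      fin_cases n
      · simpa [evalP, pderiv_X] using hx
      · simpa [evalP, pderiv_X] using hy
    have := hp.mul hX
    simp only [evalP, Derivation.leibniz, map_mul, map_add, smul_eq_mul] at *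
    refine HasDerivAt.congr_deriv this ?_
    ring

theorem evalP_continuous (P : MvPolynomial (Fin 2) ℝ) {T : Type*} [TopologicalSpace T]
    (x y : T → ℝ) (hx : Continuous x) (hy : Continuous y) :
    Continuous (fun s => evalP P (x s) (y s)) := by
  unfold evalP
  apply P.continuous_eval.comp
  apply continuous_pi
  intro i
  fin_cases i
  · exact hx
  · exact hy

theorem evalP_contDiff (P : MvPolynomial (Fin 2) ℝ) (x y : ℝ → ℝ)
    (hx : ContDiff ℝ (⊤ : ℕ∞) x) (hy : ContDiff ℝ (⊤ : ℕ∞) y) :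
    ContDiff ℝ (⊤ : ℕ∞) (fun s => evalP P (x s) (y s)) := by
  induction P using MvPolynomial.induction_on with
  | C a => simpa [evalP] using contDiff_const
  | add p q hp hq =>
    simp only [evalP, map_add] at *
    exact hp.add hq
  | mul_X p n hp =>
    simp only [evalP, map_mul, eval_X] at *
    apply hp.mul
    fin_cases n
    · exact hx
    · exact hy

/-! Homogeneous facts -/

theorem hom_aeval_smul {A : Type*} [CommRing A] [Algebra ℝ A] (Q : MvPolynomial (Fin 2) ℝ) (e : ℕ)
    (hQ : Q.IsHomogeneous e) (r : A) (w : Fin 2 → A) :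
    aeval (fun i => r * w i) Q = r ^ e * aeval w Q := by
  rw [aeval_def, aeval_def, eval₂_eq', eval₂_eq', Finset.mul_sum]
  refine Finset.sum_congr rfl fun m hm => ?_
  have h := hQ (mem_support_iff.1 hm)
  have h2 : ∑ i, m i = e := by
    rw [← h, Finsupp.weight_apply, Finsupp.sum_fintype _ _ (by simp)]
    simp
  simp_rw [mul_pow]
  rw [Finset.prod_mul_distrib, Finset.prod_pow_eq_pow_sum, h2]
  ring

theorem evalP_hom (Q : MvPolynomial (Fin 2) ℝ) (e : ℕ)
    (hQ : Q.IsHomogeneous e) (r x y : ℝ) : evalP Q (r * x) (r * y) = r ^ e * evalP Q x y := by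
  have := hom_aeval_smul Q e hQ r ![x, y]
  have h2 : (fun i => r * ![x, y] i) = ![r * x, r * y] := by
    funext i; fin_cases i <;> rfl
  rw [h2] at this
  simpa [evalP, aeval_eq_eval] using this

noncomputable def linF (a b : ℝ) : MvPolynomial (Fin 2) ℝ := C b * X 0 - C a * X 1

theorem linF_dvd (Q : MvPolynomial (Fin 2) ℝ) (e : ℕ) (hQ : Q.IsHomogeneous e) (a b : ℝ)
    (hab : a ^ 2 + b ^ 2 = 1) (h0 : evalP Q a b = 0) : linF a b ∣ Q := by
  rw [← Ideal.mem_span_singleton, ← Ideal.Quotient.eq_zero_iff_mem]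
  set I := Ideal.span {linF a b}
  set π := Ideal.Quotient.mkₐ ℝ I
  have hL : π (linF a b) = 0 := Ideal.Quotient.eq_zero_iff_mem.2 (Ideal.subset_span rfl)
  have hCC : (C a : MvPolynomial (Fin 2) ℝ) ^ 2 + C b ^ 2 = 1 := by
    rw [← C_pow, ← C_pow, ← C_add, hab, C_1]
  have hw : ∀ i, π (X i) = π (C a * X 0 + C b * X 1) * algebraMap ℝ _ (![a, b] i) := by
    have hal : ∀ c : ℝ, algebraMap ℝ (MvPolynomial (Fin 2) ℝ ⧸ I) c = π (C c) := fun c => rfl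
    intro i
    rw [hal, ← map_mul, ← sub_eq_zero, ← map_sub]
    fin_cases i
    · have : (X 0 - (C a * X 0 + C b * X 1) * C a : MvPolynomial (Fin 2) ℝ) = C b * linF a b := by
        unfold linF; linear_combination (-X 0) * hCC
      simpa [hL] using congrArg π this
    · have : (X 1 - (C a * X 0 + C b * X 1) * C b : MvPolynomial (Fin 2) ℝ) = -C a * linF a b := by
        unfold linF; linear_combination (-X 1) * hCC
      simpa [hL] using congrArg π this
  change π Q = 0
  have h1 : π Q = aeval (fun i => π (X i)) Q := by
    have : π = aeval (fun i => π (X i)) := by ext i; simp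
    exact DFunLike.congr_fun this Q
  rw [h1]
  simp_rw [hw]
  rw [hom_aeval_smul Q e hQ]
  have h2 : aeval (fun i => algebraMap ℝ (MvPolynomial (Fin 2) ℝ ⧸ I) (![a, b] i)) Q
      = algebraMap ℝ _ (evalP Q a b) := by
    rw [evalP, ← aeval_eq_eval]
    exact MvPolynomial.aeval_algebraMap_apply _ _ _
  rw [h2, h0, map_zero, mul_zero]

theorem evalP_linF (a b x y : ℝ) : evalP (linF a b) x y = b * x - a * y := by
  simp [evalP, linF]

theorem linF_finMult (F : MvPolynomial (Fin 2) ℝ) (hF : F ≠ 0) (a b : ℝ) :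
    FiniteMultiplicity (linF a b) F := by
  apply FiniteMultiplicity.of_not_isUnit _ hF
  intro hu
  have := hu.map (MvPolynomial.eval ![a, b])
  have h2 := evalP_linF a b a b
  unfold evalP at h2
  rw [h2] at this
  apply this.ne_zero
  ring

theorem linMult_eq (F : MvPolynomial (Fin 2) ℝ) (hF : F ≠ 0) (a b : ℝ) :
    linMult F a b = multiplicity (linF a b) F := by
  unfold linMult
  have : {m : ℕ | (C b * X 0 - C a * X 1) ^ m ∣ F} = Set.Iic (multiplicity (linF a b) F) := by
    ext m
    exact (linF_finMult F hF a b).pow_dvd_iff_le_multiplicity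
  rw [this, csSup_Iic]

theorem linMult_scale (F : MvPolynomial (Fin 2) ℝ) (hF : F ≠ 0) (a b c : ℝ) (hc : c ≠ 0) :
    linMult F (c * a) (c * b) = linMult F a b := by
  rw [linMult_eq F hF, linMult_eq F hF]
  apply multiplicity_eq_of_associated_left
  have h : linF (c * a) (c * b) = linF a b * C c := by
    unfold linF; simp only [C_mul]; ring
  rw [h]
  have hu : IsUnit (C c : MvPolynomial (Fin 2) ℝ) :=
    (isUnit_iff_ne_zero.2 hc).map (C : ℝ →+* MvPolynomial (Fin 2) ℝ)
  exact (associated_mul_unit_left (linF a b) (C c) hu).symm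

theorem hom_factor (F L : MvPolynomial (Fin 2) ℝ) (d m : ℕ) (hF : F.IsHomogeneous d) (hF0 : F ≠ 0)
    (hL : L.IsHomogeneous m) (Q : MvPolynomial (Fin 2) ℝ) (h : F = L * Q) :
    ∃ e, Q.IsHomogeneous e := by
  have hL0 : L ≠ 0 := by rintro rfl; simp at h; exact hF0 h
  have hmul : ∀ j, homogeneousComponent (m + j) (L * Q) = L * homogeneousComponent j Q := by
    intro j
    let _ := gradedAlgebra (σ := Fin 2) (R := ℝ)
    have h1 := DirectSum.coe_decompose_mul_add_of_left_mem (homogeneousSubmodule (Fin 2) ℝ)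
      (i := m) (j := j) (a := L) (b := Q) hL
    rw [← decomposition.decompose'_apply, ← decomposition.decompose'_apply]
    exact h1
  have hz : ∀ j, m + j ≠ d → homogeneousComponent j Q = 0 := by
    intro j hj
    have h1 := hmul j
    rw [← h, homogeneousComponent_of_mem hF, if_neg (by omega)] at h1
    exact (mul_eq_zero.1 h1.symm).resolve_left hL0
  refine ⟨d - m, ?_⟩
  rw [← sum_homogeneousComponent Q]
  apply IsHomogeneous.sum
  intro j _
  by_cases hj : m + j = d
  · have : d - m = j := by omega
    rw [this]; exact homogeneousComponent_isHomogeneous j Q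
  · rw [hz j hj]; exact isHomogeneous_zero _ _ _

theorem local_factor (F : MvPolynomial (Fin 2) ℝ) (d : ℕ) (hF : F.IsHomogeneous d) (hF0 : F ≠ 0)
    (z : ℝ) (hz : evalP F (Real.cos z) (Real.sin z) = 0) :
    1 ≤ linMult F (Real.cos z) (Real.sin z) ∧ ∃ q : ℝ → ℝ, ContDiff ℝ (⊤ : ℕ∞) q ∧ q z ≠ 0 ∧
      ∀ t, evalP F (Real.cos t) (Real.sin t) =
        Real.sin (t - z) ^ (linMult F (Real.cos z) (Real.sin z)) * q t := by
  have hcs := Real.cos_sq_add_sin_sq z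
  have hfm := linF_finMult F hF0 (Real.cos z) (Real.sin z)
  rw [linMult_eq F hF0]
  set L := linF (Real.cos z) (Real.sin z) with hLdef
  set m := multiplicity L F with hm
  have hLh : L.IsHomogeneous 1 := by
    rw [hLdef]; unfold linF
    exact (isHomogeneous_C_mul_X _ _).sub (isHomogeneous_C_mul_X _ _)
  obtain ⟨Q, hQ, hnd⟩ := hfm.exists_eq_pow_mul_and_not_dvd
  refine ⟨hfm.pow_dvd_iff_le_multiplicity.1 (by
    rw [pow_one]; exact linF_dvd F d hF _ _ hcs hz), ?_⟩
  obtain ⟨e, he⟩ := hom_factor F (L ^ m) d (1 * m) hF hF0 (hLh.pow m) Q hQ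
  have hQz : evalP Q (Real.cos z) (Real.sin z) ≠ 0 := fun h => hnd (linF_dvd Q e he _ _ hcs h)
  refine ⟨fun t => (-1) ^ m * evalP Q (Real.cos t) (Real.sin t), ?_, ?_, ?_⟩
  · exact contDiff_const.mul (evalP_contDiff Q _ _ Real.contDiff_cos Real.contDiff_sin)
  · exact mul_ne_zero (pow_ne_zero _ (by norm_num)) hQz
  · intro t
    have h1 : evalP F (Real.cos t) (Real.sin t) =
        evalP L (Real.cos t) (Real.sin t) ^ m * evalP Q (Real.cos t) (Real.sin t) := by
      conv_lhs => rw [hQ]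
      simp [evalP, m]
    rw [h1, hLdef, evalP_linF, ← mul_assoc, ← mul_pow]
    congr 2
    rw [Real.sin_sub]; ring

theorem finite_slopes (F : MvPolynomial (Fin 2) ℝ) (d : ℕ) (hF : F.IsHomogeneous d) (hF0 : F ≠ 0) :
    {a : ℝ | evalP F a 1 = 0}.Finite := by
  set P : Polynomial ℝ := aeval ![Polynomial.X, 1] F with hP
  have hev : ∀ a, P.eval a = evalP F a 1 := by
    intro a
    have : (Polynomial.aeval a).comp (aeval ![Polynomial.X, 1]) =
        (aeval ![a, 1] : MvPolynomial (Fin 2) ℝ →ₐ[ℝ] ℝ) := by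
      ext i; fin_cases i <;> simp
    have h2 := DFunLike.congr_fun this F
    simpa [evalP, aeval_eq_eval, hP, Polynomial.coe_aeval_eq_eval] using h2
  have hP0 : P ≠ 0 := by
    intro h
    apply hF0
    have h1 : F * X 1 = 0 := by
      apply MvPolynomial.funext
      intro w
      rw [map_mul, map_zero, eval_X]
      by_cases hw : w 1 = 0
      · rw [hw, mul_zero]
      · have h2 := evalP_hom F d hF (w 1) (w 0 / w 1) 1
        rw [← hev, h, Polynomial.eval_zero, mul_zero, mul_one, mul_div_cancel₀ _ hw] at h2
        have h3 : ![w 0, w 1] = w := by funext i; fin_cases i <;> rfl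
        rw [evalP, h3] at h2
        rw [h2, zero_mul]
    exact (mul_eq_zero.1 h1).resolve_right (X_ne_zero 1)
  refine (P.roots.toFinset.finite_toSet).subset fun a ha => ?_
  simp only [Finset.mem_coe, Multiset.mem_toFinset, Polynomial.mem_roots hP0, Polynomial.IsRoot.def]
  rw [hev]; exact ha

/-- projective class of an angle -/
noncomputable def cls (z : ℝ) : Option ℝ :=
  open Classical in if Real.sin z = 0 then none else some (Real.cos z / Real.sin z)

theorem cls_inj (a z w : ℝ) (hz : z ∈ Set.Ioo a (a + Real.pi)) (hw : w ∈ Set.Ioo a (a + Real.pi))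
    (h : cls z = cls w) : z = w := by
  have key : Real.sin (z - w) = 0 := by
    rw [Real.sin_sub]
    unfold cls at h
    by_cases h1 : Real.sin z = 0 <;> by_cases h2 : Real.sin w = 0
    · rw [h1, h2]; ring
    · simp [h1, h2] at h
    · simp [h1, h2] at h
    · simp only [h1, h2, if_false, Option.some.injEq] at h
      field_simp at h
      linarith
  rw [Real.sin_eq_zero_iff_of_lt_of_lt (by linarith [hz.1, hw.2]) (by linarith [hz.2, hw.1])] at key
  linarith

theorem sum_linMult_le (F : MvPolynomial (Fin 2) ℝ) (d : ℕ) (hF : F.IsHomogeneous d) (hF0 : F ≠ 0)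
    (a : ℝ) (Z : Finset ℝ) (hZ : ∀ z ∈ Z, z ∈ Set.Ioo a (a + Real.pi)) :
    ∑ z ∈ Z, linMult F (Real.cos z) (Real.sin z) ≤ realDegreeOf F := by
  classical
  have hsupp : (Function.support fun a => linMult F a 1).Finite := by
    refine (finite_slopes F d hF hF0).subset fun b hb => ?_
    have h1 : 1 ≤ linMult F b 1 := Nat.one_le_iff_ne_zero.2 hb
    rw [linMult_eq F hF0, ← (linF_finMult F hF0 b 1).pow_dvd_iff_le_multiplicity, pow_one] at h1
    obtain ⟨Q, rfl⟩ := h1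
    have := evalP_linF b 1 b 1
    simp only [evalP] at this
    simp [evalP, this]
  set v : Option ℝ → ℕ := fun o => o.elim (linMult F 1 0) (fun b => linMult F b 1) with hv
  have hval : ∀ z, linMult F (Real.cos z) (Real.sin z) = v (cls z) := by
    intro z
    unfold cls
    split_ifs with h
    · have hc : Real.cos z ≠ 0 := by
        intro hc
        have := Real.cos_sq_add_sin_sq z
        rw [h, hc] at this
        norm_num at this
      have := linMult_scale F hF0 1 0 (Real.cos z) hc
      simpa [hv, h] using this
    · have := linMult_scale F hF0 (Real.cos z / Real.sin z) 1 (Real.sin z) h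
      rw [mul_div_cancel₀ _ h, mul_one] at this
      simpa [hv] using this
  simp_rw [hval]
  have hinj : Set.InjOn cls (Z : Set ℝ) := fun z hz w hw h => cls_inj a z w (hZ z hz) (hZ w hw) h
  rw [← Finset.sum_image (f := v) hinj]
  unfold realDegreeOf
  rw [finsum_eq_sum_of_support_subset _ (s := hsupp.toFinset) (by simp)]
  have h1 : ∑ o ∈ Finset.insertNone hsupp.toFinset, v o =
      (∑ b ∈ hsupp.toFinset, linMult F b 1) + linMult F 1 0 := by
    rw [Finset.sum_insertNone, add_comm]; rfl
  rw [← h1]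
  apply Finset.sum_le_sum_of_ne_zero
  intro o _ ho
  rw [Finset.mem_insertNone]
  intro b hb
  cases hb
  simpa [hv] using ho

theorem finite_zeros (F : MvPolynomial (Fin 2) ℝ) (d : ℕ) (hF : F.IsHomogeneous d) (hF0 : F ≠ 0)
    (a : ℝ) : {z | z ∈ Set.Ioo a (a + Real.pi) ∧ evalP F (Real.cos z) (Real.sin z) = 0}.Finite := by
  have hinj : Set.InjOn cls {z | z ∈ Set.Ioo a (a + Real.pi) ∧
      evalP F (Real.cos z) (Real.sin z) = 0} := fun z hz w hw h => cls_inj a z w hz.1 hw.1 h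
  refine Set.Finite.of_finite_image ?_ hinj
  refine (((finite_slopes F d hF hF0).image some).insert none).subset ?_
  rintro _ ⟨z, hz, rfl⟩
  unfold cls
  split_ifs with h
  · simp
  · right
    refine ⟨_, ?_, rfl⟩
    have h2 := evalP_hom F d hF (Real.sin z) (Real.cos z / Real.sin z) 1
    rw [mul_div_cancel₀ _ h, mul_one, hz.2] at h2
    exact (mul_eq_zero.1 h2.symm).resolve_left (pow_ne_zero _ h)

theorem exists_nonzero_angle (F : MvPolynomial (Fin 2) ℝ) (d : ℕ) (hF : F.IsHomogeneous d)
    (hF0 : F ≠ 0) : ∃ a, evalP F (Real.cos a) (Real.sin a) ≠ 0 := by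
  by_contra hc
  push Not at hc
  have h := finite_zeros F d hF hF0 0
  refine (Set.Ioo_infinite (a := (0:ℝ)) (b := 0 + Real.pi) (by linarith [Real.pi_pos])) (h.subset ?_)
  exact fun z hz => ⟨hz, hc z⟩


noncomputable def angG (f : MvPolynomial (Fin 2) ℝ) (k : ℕ) (t : ℝ) : ℝ :=
  evalP (homogeneousComponent k f) (Real.cos t) (Real.sin t)

theorem angG_contDiff (f : MvPolynomial (Fin 2) ℝ) (k : ℕ) : ContDiff ℝ (⊤ : ℕ∞) (angG f k) :=
  evalP_contDiff _ _ _ Real.contDiff_cos Real.contDiff_sin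

theorem evalP_expand (f : MvPolynomial (Fin 2) ℝ) (d : ℕ) (hd : f.totalDegree = d) (r t : ℝ) :
    evalP f (r * Real.cos t) (r * Real.sin t) = ∑ k ∈ Finset.range (d + 1), r ^ k * angG f k t := by
  have h : evalP f (r * Real.cos t) (r * Real.sin t) =
      ∑ k ∈ Finset.range (d + 1), evalP (homogeneousComponent k f)
        (r * Real.cos t) (r * Real.sin t) := by
    conv_lhs => rw [← sum_homogeneousComponent f, hd]
    simp only [evalP, map_sum]
  rw [h]
  refine Finset.sum_congr rfl fun k _ => ?_
  rw [evalP_hom _ k (homogeneousComponent_isHomogeneous k f)]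
  rfl

theorem radSum_eq (f : MvPolynomial (Fin 2) ℝ) (d : ℕ) (hd : f.totalDegree = d) (r t : ℝ) :
    radSum (angG f) d r t = r * (uFun f r t * Real.cos t + vFun f r t * Real.sin t) := by
  have h1 := evalP_hasDerivAt f (fun r => r * Real.cos t) (fun r => r * Real.sin t) _ _ r
    ((hasDerivAt_id r).mul_const (Real.cos t)) ((hasDerivAt_id r).mul_const (Real.sin t))
  simp_rw [evalP_expand f d hd] at h1
  have h2 : HasDerivAt (fun r => ∑ k ∈ Finset.range (d + 1), r ^ k * angG f k t)
      (∑ k ∈ Finset.range (d + 1), (k * r ^ (k - 1)) * angG f k t) r :=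
    HasDerivAt.fun_sum fun k _ => (hasDerivAt_pow k r).mul_const _
  have h3 := h1.unique h2
  simp only [one_mul] at h3
  unfold uFun vFun
  rw [h3]
  unfold radSum
  rw [Finset.mul_sum]
  refine Finset.sum_congr rfl fun k _ => ?_
  rcases k with _ | k
  · simp
  · simp only [Nat.add_sub_cancel]; ring

theorem angSum_eq (f : MvPolynomial (Fin 2) ℝ) (d : ℕ) (hd : f.totalDegree = d) (r t : ℝ) :
    angSum (angG f) d r t = r * (vFun f r t * Real.cos t - uFun f r t * Real.sin t) := by
  have h1 := evalP_hasDerivAt f (fun t => r * Real.cos t) (fun t => r * Real.sin t) _ _ t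
    ((Real.hasDerivAt_cos t).const_mul r) ((Real.hasDerivAt_sin t).const_mul r)
  simp_rw [evalP_expand f d hd] at h1
  have h2 : HasDerivAt (fun t => ∑ k ∈ Finset.range (d + 1), r ^ k * angG f k t)
      (∑ k ∈ Finset.range (d + 1), r ^ k * deriv (angG f k) t) t :=
    HasDerivAt.fun_sum fun k _ =>
      (((angG_contDiff f k).differentiable (by simp)) t).hasDerivAt.const_mul _
  have h3 := h1.unique h2
  unfold angSum
  rw [← h3]
  unfold uFun vFun
  ring

noncomputable def dFun (P : MvPolynomial (Fin 2) ℝ) (r t : ℝ) : ℝ :=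
  evalP (pderiv 0 P) (r * Real.cos t) (r * Real.sin t) * (r * -Real.sin t) +
    evalP (pderiv 1 P) (r * Real.cos t) (r * Real.sin t) * (r * Real.cos t)

theorem dFun_spec (P : MvPolynomial (Fin 2) ℝ) (r t : ℝ) :
    HasDerivAt (fun t => evalP P (r * Real.cos t) (r * Real.sin t)) (dFun P r t) t :=
  evalP_hasDerivAt P (fun t => r * Real.cos t) (fun t => r * Real.sin t) _ _ t
    ((Real.hasDerivAt_cos t).const_mul r) ((Real.hasDerivAt_sin t).const_mul r)

theorem evalP_circ_cont (P : MvPolynomial (Fin 2) ℝ) {T : Type*} [TopologicalSpace T]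
    (r t : T → ℝ) (hr : Continuous r) (ht : Continuous t) :
    Continuous (fun s => evalP P (r s * Real.cos (t s)) (r s * Real.sin (t s))) :=
  evalP_continuous P _ _ (by fun_prop) (by fun_prop)

theorem dFun_cont (P : MvPolynomial (Fin 2) ℝ) {T : Type*} [TopologicalSpace T]
    (r t : T → ℝ) (hr : Continuous r) (ht : Continuous t) :
    Continuous (fun s => dFun P (r s) (t s)) := by
  unfold dFun
  have h1 := evalP_circ_cont (pderiv 0 P) r t hr ht
  have h2 := evalP_circ_cont (pderiv 1 P) r t hr ht
  fun_prop

noncomputable def igd (f : MvPolynomial (Fin 2) ℝ) (r t : ℝ) : ℝ :=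
  (uFun f r t * dFun (pderiv 1 f) r t - vFun f r t * dFun (pderiv 0 f) r t) /
    (uFun f r t ^ 2 + vFun f r t ^ 2)

theorem gradIndex_eq_s3 (f : MvPolynomial (Fin 2) ℝ) (r : ℝ) :
    gradIndex f r = (1 / (2 * Real.pi)) * ∫ t in (0:ℝ)..(2 * Real.pi), igd f r t := by
  unfold gradIndex igd
  have h1 : ∀ t, deriv (vFun f r) t = dFun (pderiv 1 f) r t := fun t => (dFun_spec _ r t).deriv
  have h2 : ∀ t, deriv (uFun f r) t = dFun (pderiv 0 f) r t := fun t => (dFun_spec _ r t).deriv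
  simp_rw [h1, h2]

theorem grad_ne (f : MvPolynomial (Fin 2) ℝ) (R : ℝ) (hR : 0 < R)
    (hadm : ∀ p : ℝ × ℝ, IsCriticalPt f p → p.1 ^ 2 + p.2 ^ 2 < R ^ 2) (r t : ℝ) (hr : R ≤ r) :
    uFun f r t ^ 2 + vFun f r t ^ 2 ≠ 0 := by
  intro h
  have hu : uFun f r t = 0 := by nlinarith [sq_nonneg (uFun f r t), sq_nonneg (vFun f r t)]
  have hv : vFun f r t = 0 := by nlinarith [sq_nonneg (uFun f r t), sq_nonneg (vFun f r t)]
  have h1 := hadm (r * Real.cos t, r * Real.sin t) ⟨hu, hv⟩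
  simp only at h1
  have h2 : (r * Real.cos t) ^ 2 + (r * Real.sin t) ^ 2 = r ^ 2 := by
    linear_combination r ^ 2 * Real.cos_sq_add_sin_sq t
  rw [h2] at h1
  nlinarith

theorem exists_lift (f : MvPolynomial (Fin 2) ℝ) (R : ℝ) (hR : 0 < R)
    (hadm : ∀ p : ℝ × ℝ, IsCriticalPt f p → p.1 ^ 2 + p.2 ^ 2 < R ^ 2) (r : ℝ) (hr : R ≤ r) :
    ∃ φ : ℝ → ℝ, Continuous φ ∧ (∀ a b, φ b - φ a = ∫ t in a..b, igd f r t) ∧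
      ∀ t, ∃ ρ > 0, uFun f r t = ρ * Real.cos (φ t) ∧ vFun f r t = ρ * Real.sin (φ t) :=
  angle_lift (uFun f r) (vFun f r) (dFun (pderiv 0 f) r) (dFun (pderiv 1 f) r)
    (fun t => dFun_spec _ r t) (fun t => dFun_spec _ r t)
    (dFun_cont _ (fun _ => r) id continuous_const continuous_id)
    (dFun_cont _ (fun _ => r) id continuous_const continuous_id)
    (fun t => grad_ne f R hR hadm r t hr)

theorem gradIndex_int (f : MvPolynomial (Fin 2) ℝ) (R : ℝ) (hR : 0 < R)
    (hadm : ∀ p : ℝ × ℝ, IsCriticalPt f p → p.1 ^ 2 + p.2 ^ 2 < R ^ 2) (r : ℝ) (hr : R ≤ r) :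
    ∃ n : ℤ, gradIndex f r = n := by
  obtain ⟨φ, -, hφ, hρ⟩ := exists_lift f R hR hadm r hr
  rw [gradIndex_eq_s3, ← hφ]
  obtain ⟨ρ0, h0, hu0, hv0⟩ := hρ 0
  obtain ⟨ρ1, h1, hu1, hv1⟩ := hρ (2 * Real.pi)
  have eu : uFun f r (2 * Real.pi) = uFun f r 0 := by simp [uFun]
  have ev : vFun f r (2 * Real.pi) = vFun f r 0 := by simp [vFun]
  rw [eu, hu0] at hu1
  rw [ev, hv0] at hv1
  have hρρ : ρ0 = ρ1 := by
    have : ρ0 ^ 2 = ρ1 ^ 2 := by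
      have e1 : (ρ0 * Real.cos (φ 0)) ^ 2 + (ρ0 * Real.sin (φ 0)) ^ 2 = ρ0 ^ 2 := by
        linear_combination ρ0 ^ 2 * Real.cos_sq_add_sin_sq (φ 0)
      rw [hu1, hv1] at e1
      linear_combination -e1 + ρ1 ^ 2 * Real.cos_sq_add_sin_sq (φ (2 * Real.pi))
    exact (pow_left_inj₀ h0.le h1.le (by norm_num)).1 this
  subst hρρ
  have hc := mul_left_cancel₀ h0.ne' hu1
  have hs := mul_left_cancel₀ h0.ne' hv1
  have : Real.cos (φ (2 * Real.pi) - φ 0) = 1 := by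
    rw [Real.cos_sub, ← hc, ← hs]
    linear_combination Real.cos_sq_add_sin_sq (φ 0)
  obtain ⟨n, hn⟩ := (Real.cos_eq_one_iff _).1 this
  refine ⟨n, ?_⟩
  rw [← hn]
  have := Real.pi_ne_zero
  field_simp

theorem gradIndex_const (f : MvPolynomial (Fin 2) ℝ) (R : ℝ) (hR : 0 < R)
    (hadm : ∀ p : ℝ × ℝ, IsCriticalPt f p → p.1 ^ 2 + p.2 ^ 2 < R ^ 2) (r : ℝ) (hr : R ≤ r) :
    gradIndex f r = gradIndex f R := by
  set I : ℝ → ℝ := fun s => gradIndex f (max s R) with hI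
  have hInt : ∀ s, ∃ n : ℤ, I s = n := fun s => gradIndex_int f R hR hadm _ (le_max_right _ _)
  have hcont : Continuous I := by
    simp only [hI, gradIndex_eq_s3]
    apply continuous_const.mul
    apply intervalIntegral.continuous_parametric_intervalIntegral_of_continuous'
    unfold Function.uncurry igd
    have hm : Continuous fun p : ℝ × ℝ => max p.1 R := by fun_prop
    have c1 : Continuous fun p : ℝ × ℝ => uFun f (max p.1 R) p.2 :=
      evalP_circ_cont _ _ _ hm continuous_snd
    have c2 : Continuous fun p : ℝ × ℝ => vFun f (max p.1 R) p.2 :=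
      evalP_circ_cont _ _ _ hm continuous_snd
    have c3 := dFun_cont (pderiv 0 f) (fun p : ℝ × ℝ => max p.1 R) _ hm continuous_snd
    have c4 := dFun_cont (pderiv 1 f) (fun p : ℝ × ℝ => max p.1 R) _ hm continuous_snd
    exact ((c1.mul c4).sub (c2.mul c3)).div ((c1.pow 2).add (c2.pow 2))
      (fun p => grad_ne f R hR hadm _ _ (le_max_right _ _))
  choose N hN using hInt
  have hNc : ∀ s s', N s ≤ N s' := by
    intro s s'
    by_contra h
    push Not at h
    have h1 : (N s' : ℝ) + 1 ≤ N s := by exact_mod_cast h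
    obtain ⟨x, hx⟩ := mem_range_of_exists_le_of_exists_ge (c := (N s' : ℝ) + 1 / 2) hcont
      ⟨s', by rw [hN]; linarith⟩ ⟨s, by rw [hN]; linarith⟩
    rw [hN] at hx
    have h2 : (2 * N x : ℝ) = 2 * N s' + 1 := by linarith
    have h3 : 2 * N x = 2 * N s' + 1 := by exact_mod_cast h2
    omega
  have h1 : I r = I R := by
    rw [hN, hN, le_antisymm (hNc r R) (hNc R r)]
  simpa [hI, hr] using h1

theorem igd_periodic (f : MvPolynomial (Fin 2) ℝ) (r : ℝ) :
    Function.Periodic (igd f r) (2 * Real.pi) := by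
  intro t
  simp [igd, uFun, vFun, dFun]

theorem exists_zero_angle (f : MvPolynomial (Fin 2) ℝ) (d : ℕ) (hd : f.totalDegree = d)
    (hd1 : 1 ≤ d) (hnoncpt : ∃ t : ℝ, ¬ IsCompact {p : ℝ × ℝ | evalP f p.1 p.2 = t}) :
    ∃ z, angG f d z = 0 := by
  by_contra hc
  push Not at hc
  obtain ⟨τ, hτ⟩ := hnoncpt
  apply hτ
  have h1 := lead_dom (fun k t => if k = 0 then angG f 0 t - τ else angG f k t) d
    (Set.Icc (-Real.pi) Real.pi) isCompact_Icc (by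
      intro k
      split_ifs
      · exact (angG_contDiff f 0).continuous.sub continuous_const
      · exact (angG_contDiff f k).continuous)
    (by
      intro t _
      rw [if_neg (by omega)]
      exact hc t)
  obtain ⟨R0, hR0⟩ := eventually_atTop.1 h1
  have hclosed : IsClosed {p : ℝ × ℝ | evalP f p.1 p.2 = τ} :=
    isClosed_eq (evalP_continuous f _ _ continuous_fst continuous_snd) continuous_const
  refine Metric.isCompact_of_isClosed_isBounded hclosed ?_
  refine (Metric.isBounded_closedBall (x := (0 : ℝ × ℝ)) (r := R0)).subset ?_
  rintro ⟨x, y⟩ hxy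
  simp only [Set.mem_ofPred_eq] at hxy
  set z : ℂ := ⟨x, y⟩ with hz
  have hx : ‖z‖ * Real.cos z.arg = x := Complex.norm_mul_cos_arg z
  have hy : ‖z‖ * Real.sin z.arg = y := Complex.norm_mul_sin_arg z
  have hlt : ‖z‖ < R0 := by
    by_contra hge
    have h2 := hR0 ‖z‖ (not_lt.1 hge) z.arg ⟨(Complex.neg_pi_lt_arg z).le, Complex.arg_le_pi z⟩
    have h3 : ∑ k ∈ Finset.range (d + 1),
        ‖z‖ ^ k * (if k = 0 then angG f 0 z.arg - τ else angG f k z.arg) = 0 := by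
      have h4 := evalP_expand f d hd ‖z‖ z.arg
      rw [hx, hy, hxy, Finset.sum_range_succ'] at h4
      rw [Finset.sum_range_succ']
      simp at h4 ⊢
      linarith
    rw [h3] at h2
    simp at h2
  rw [mem_closedBall_zero_iff, Prod.norm_def]
  have h5 : |x| ≤ ‖z‖ := Complex.abs_re_le_norm z
  have h6 : |y| ≤ ‖z‖ := Complex.abs_im_le_norm z
  simp only [Real.norm_eq_abs]
  exact max_le (h5.trans hlt.le) (h6.trans hlt.le)

theorem angG_shift (f : MvPolynomial (Fin 2) ℝ) (d : ℕ) (z : ℝ) (n : ℤ) :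
    angG f d (z - n * Real.pi) = ((-1) ^ n) ^ d * angG f d z := by
  unfold angG
  rw [Real.cos_sub_int_mul_pi, Real.sin_sub_int_mul_pi,
    evalP_hom _ d (homogeneousComponent_isHomogeneous d f)]

theorem half_turn (f : MvPolynomial (Fin 2) ℝ) (d : ℕ) (hd1 : 1 ≤ d)
    (hF0 : homogeneousComponent d f ≠ 0) (hz : ∃ z, angG f d z = 0) (a : ℝ)
    (ha : angG f d a ≠ 0) :
    ∃ M N : ℤ, M ≤ realDegreeOf (homogeneousComponent d f) ∧
      N ≤ realDegreeOf (homogeneousComponent d f) - 2 ∧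
      GoodInt (angG f) d a (a + Real.pi) M N := by
  have hF := homogeneousComponent_isHomogeneous d f
  have hfin := finite_zeros _ d hF hF0 a
  have hpi := Real.pi_pos
  have ha' : angG f d (a + Real.pi) ≠ 0 := by
    have := angG_shift f d a (-1)
    push_cast at this
    rw [show a + Real.pi = a - -1 * Real.pi by ring, this]
    exact mul_ne_zero (pow_ne_zero _ (zpow_ne_zero _ (by norm_num))) ha
  set Z := hfin.toFinset with hZ
  have hmem : ∀ t, t ∈ Z ↔ t ∈ Set.Ioo a (a + Real.pi) ∧ angG f d t = 0 := by
    intro t; rw [hZ, Set.Finite.mem_toFinset]; rfl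
  have hgood := good_all (angG f) d hd1 (angG_contDiff f)
    (fun z => linMult (homogeneousComponent d f) (Real.cos z) (Real.sin z))
    (fun z hz => local_factor _ d hF hF0 z hz) a ha Z.card (a + Real.pi) (by linarith) ha' Z (by
      intro t
      rw [hmem]
      constructor
      · rintro ⟨h1, h2⟩
        exact ⟨⟨h1.1.le, h1.2.le⟩, h2⟩
      · rintro ⟨h1, h2⟩
        exact ⟨⟨lt_of_le_of_ne h1.1 (fun h => ha (h ▸ h2)),
          lt_of_le_of_ne h1.2 (fun h => ha' (h ▸ h2))⟩, h2⟩) rfl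
  have hsum := sum_linMult_le _ d hF hF0 a Z (fun z hz => ((hmem z).1 hz).1)
  have hsum' : ∑ z ∈ Z, (linMult (homogeneousComponent d f) (Real.cos z) (Real.sin z) : ℤ) ≤
      realDegreeOf (homogeneousComponent d f) := by exact_mod_cast hsum
  refine ⟨_, _, hsum', ?_, hgood⟩
  have hne : 1 ≤ Z.card := by
    obtain ⟨z, hz⟩ := hz
    rw [Nat.one_le_iff_ne_zero, Finset.card_ne_zero]
    refine ⟨toIcoMod hpi a z, ?_⟩
    have h1 := toIcoMod_mem_Ico hpi a z
    have h2 : toIcoMod hpi a z = z - (toIcoDiv hpi a z : ℤ) * Real.pi := by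
      rw [toIcoMod, zsmul_eq_mul]
    have h3 : angG f d (toIcoMod hpi a z) = 0 := by
      rw [h2, angG_shift, hz, mul_zero]
    rw [hmem]
    exact ⟨⟨lt_of_le_of_ne h1.1 (fun h => ha (h ▸ h3)), h1.2⟩, h3⟩
  rw [Finset.sum_sub_distrib]
  simp only [Finset.sum_const, nsmul_eq_mul]
  have : (1 : ℤ) ≤ Z.card := by exact_mod_cast hne
  linarith

theorem index_abs_le_real_degree_sub_one
    (f : MvPolynomial (Fin 2) ℝ) (d : ℕ) (hd : f.totalDegree = d) (hd1 : 1 ≤ d)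
    (hfin : {p : ℝ × ℝ | IsCriticalPt f p}.Finite)
    (hnoncpt : ∃ t : ℝ, ¬ IsCompact {p : ℝ × ℝ | evalP f p.1 p.2 = t})
    (R : ℝ) (hR : 0 < R)
    (hadm : ∀ p : ℝ × ℝ, IsCriticalPt f p → p.1 ^ 2 + p.2 ^ 2 < R ^ 2)
    (i : ℤ) (hi : (i : ℝ) = gradIndex f R) :
    |i| ≤ (realDegreeOf (homogeneousComponent d f) : ℤ) - 1 := by
  have hF := homogeneousComponent_isHomogeneous d f
  have hF0 : homogeneousComponent d f ≠ 0 := by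
    intro h
    have hf0 : f ≠ 0 := by rintro rfl; simp at hd; omega
    obtain ⟨m, hm, hmd⟩ := f.support.exists_mem_eq_sup (support_nonempty.2 hf0)
      (fun s => s.sum fun _ e => e)
    have h1 := congrArg (coeff m) h
    rw [coeff_homogeneousComponent, if_pos, coeff_zero] at h1
    · exact (mem_support_iff.1 hm) h1
    · rw [← hd, totalDegree, hmd]; rfl
  have hz := exists_zero_angle f d hd hd1 hnoncpt
  obtain ⟨a, ha⟩ := exists_nonzero_angle _ d hF hF0
  have ha : angG f d a ≠ 0 := ha
  have ha' : angG f d (a + Real.pi) ≠ 0 := by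
    have := angG_shift f d a (-1)
    push_cast at this
    rw [show a + Real.pi = a - -1 * Real.pi by ring, this]
    exact mul_ne_zero (pow_ne_zero _ (zpow_ne_zero _ (by norm_num))) ha
  obtain ⟨M1, N1, hM1, hN1, g1⟩ := half_turn f d hd1 hF0 hz a ha
  obtain ⟨M2, N2, hM2, hN2, g2⟩ := half_turn f d hd1 hF0 hz _ ha'
  have g := good_trans _ d hd1 (angG_contDiff f) _ _ _ _ _ _ _ ha' g1 g2
  have er := rad_event _ d hd1 (angG_contDiff f) {a} isCompact_singleton (by simpa using ha)
  obtain ⟨r, hr, her, hgr⟩ := ((eventually_ge_atTop R).and (er.and g)).exists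
  rw [← gradIndex_const f R hR hadm r hr, gradIndex_eq_s3] at hi
  have hr0 : 0 < r := by linarith
  obtain ⟨φ, hφc, hφ, hρ⟩ := exists_lift f R hR hadm r hr
  have hlift : IsLift (angG f) d r (fun t => φ t - t) := by
    refine ⟨by fun_prop, fun t => ?_⟩
    obtain ⟨ρ, h0, hu, hv⟩ := hρ t
    refine ⟨r * ρ, by positivity, ?_, ?_⟩
    · rw [radSum_eq f d hd, hu, hv, Real.cos_sub]; ring
    · rw [angSum_eq f d hd, hu, hv, Real.sin_sub]; ring
  have hper := (igd_periodic f r).intervalIntegral_add_eq 0 a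
  rw [zero_add] at hper
  rw [hper, ← hφ] at hi
  have hpi := Real.pi_pos
  have hturn : φ (a + 2 * Real.pi) - φ a = 2 * Real.pi * i := by
    rw [hi]; field_simp
  have hcos : Real.cos (φ a - a) ≠ 0 := by
    intro hc
    obtain ⟨ρ, -, h4, -⟩ := hlift.2 a
    have := her a rfl
    rw [h4] at this
    simp [hc] at this
  obtain ⟨k, hk⟩ := exists_near_int _ hcos
  have hfinal := hgr _ hlift k (k + 2 * (i - 1)) hk (by
    have e : φ (a + Real.pi + Real.pi) - (a + Real.pi + Real.pi) -
        ((k + 2 * (i - 1) : ℤ) : ℝ) * Real.pi = φ a - a - k * Real.pi := by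
      rw [show a + Real.pi + Real.pi = a + 2 * Real.pi by ring]
      push_cast
      linarith
    simp only [e]
    exact hk)
  rw [abs_le]
  omega
end
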